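/- Let R be a commutative Noetherian ring and 𝔞 a proper ideal of R such that either dim R/𝔞 = 2, or dim R = 3, or ara(𝔞) = 2. Let M be an R-module such that Ext^i_R(R/𝔞, M) is a finitely generated R-module for every i ≥ 0. If either H^{2i}_𝔞(M) is 𝔞-cofinite for every i ≥ 0, or H^{2i+1}_𝔞(M) is 𝔞-cofinite for every i ≥ 0, then H^i_𝔞(M) is 𝔞-cofinite for every i ≥ 0. -/

import Mathlib

open CategoryTheory

universe u

/-- The `R`-module `Ext^i_R(N, M)` for two `R`-modules (objects of `ModuleCat R`). -/
noncomputable def extObj {R : Type u} [CommRing R] (N M : ModuleCat.{u} R) (i : ℕ) :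
    ModuleCat.{u} R :=
  ((Ext R (ModuleCat.{u} R) i).obj (Opposite.op N)).obj M

/-- The `R`-module `Ext^i_R(R/𝔞, M)`. -/
noncomputable def extIdeal {R : Type u} [CommRing R] (𝔞 : Ideal R) (i : ℕ)
    (M : ModuleCat.{u} R) : ModuleCat.{u} R :=
  extObj (ModuleCat.of R (R ⧸ 𝔞)) M i

/-- An `R`-module `M` is `𝔞`-cofinite if `Supp_R M ⊆ V(𝔞)` and `Ext^i_R(R/𝔞, M)` is a finitely
generated `R`-module for every `i ≥ 0`. -/
def IsCofinite {R : Type u} [CommRing R] (𝔞 : Ideal R) (M : ModuleCat.{u} R) : Prop :=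
  Module.support R M ⊆ PrimeSpectrum.zeroLocus (𝔞 : Set R) ∧
    ∀ i : ℕ, Module.Finite R (extIdeal 𝔞 i M)

/-- The Krull dimension `dim_R M` of an `R`-module `M`: the Krull dimension of its support,
i.e. the supremum of `dim R/𝔭` over primes `𝔭` in the support of `M`. -/
noncomputable def moduleDim (R : Type u) [CommRing R] (M : Type u) [AddCommGroup M]
    [Module R M] : WithBot ℕ∞ :=
  Order.krullDim (Module.support R M)

/-- An `R`-module `M` is in `FD_{≤n}` if there is a finitely generated submodule `N ⊆ M`
with `dim_R (M/N) ≤ n`. -/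
def MemFD (R : Type u) [CommRing R] (n : ℕ) (M : Type u) [AddCommGroup M] [Module R M] : Prop :=
  ∃ N : Submodule R M, N.FG ∧ moduleDim R (M ⧸ N) ≤ (n : WithBot ℕ∞)

/-- An `R`-module `M` is `𝔞`-torsion if every element is annihilated by some power of `𝔞`. -/
def IsTorsionIdeal {R : Type u} [CommRing R] (𝔞 : Ideal R) (M : Type u) [AddCommGroup M]
    [Module R M] : Prop :=
  ∀ m : M, ∃ n : ℕ, ∀ a ∈ 𝔞 ^ n, a • m = 0

/-- The arithmetic rank of an ideal `𝔞`: the least `n` such that there exist `a₁, …, aₙ ∈ R`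
with `Rad (a₁, …, aₙ) = Rad 𝔞`. -/
noncomputable def arithRank {R : Type u} [CommRing R] (𝔞 : Ideal R) : ℕ :=
  sInf {n : ℕ | ∃ f : Fin n → R, (Ideal.span (Set.range f)).radical = 𝔞.radical}

universe v

section FinAway

variable {R : Type*} [CommRing R] {A B C : Type*} [AddCommGroup A] [Module R A]
  [AddCommGroup B] [Module R B] [AddCommGroup C] [Module R C]

/-- `N` has a finitely generated submodule agreeing with `N` at all primes outside `W`. -/
def FinAway (W : Set (PrimeSpectrum R)) (N : Type*) [AddCommGroup N] [Module R N] : Prop :=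
  ∃ G : Submodule R N, G.FG ∧ ∀ p ∉ W, ∀ z : N, ∃ s ∉ p.asIdeal, s • z ∈ G

/-- For every quotient `N ⧸ Y`, the submodule of elements killed by `𝔞` is `FinAway W`. -/
def SocleFinAway (W : Set (PrimeSpectrum R)) (𝔞 : Ideal R) (N : Type*) [AddCommGroup N]
    [Module R N] : Prop :=
  ∀ Y : Submodule R N, ∃ G : Submodule R N, G.FG ∧ ∀ p ∉ W, ∀ z : N, (∀ r ∈ 𝔞, r • z ∈ Y) →
    ∃ s ∉ p.asIdeal, s • z ∈ G ⊔ Y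

variable {W : Set (PrimeSpectrum R)} {𝔞 : Ideal R}

theorem FinAway.of_finite [Module.Finite R A] : FinAway W A :=
  ⟨⊤, Module.Finite.fg_top, fun p _ _ => ⟨1, p.asIdeal.one_notMem, trivial⟩⟩

theorem FinAway.mono {W' : Set (PrimeSpectrum R)} (hW : W ⊆ W') (h : FinAway W A) :
    FinAway W' A := by
  obtain ⟨G, hG, h⟩ := h
  exact ⟨G, hG, fun p hp => h p fun h => hp (hW h)⟩

theorem FinAway.of_surjective (f : A →ₗ[R] B) (hf : Function.Surjective f) (h : FinAway W A) :
    FinAway W B := by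
  obtain ⟨G, hG, h⟩ := h
  refine ⟨G.map f, hG.map f, fun p hp z => ?_⟩
  obtain ⟨a, rfl⟩ := hf z
  obtain ⟨s, hs, hsa⟩ := h p hp a
  exact ⟨s, hs, by simpa using Submodule.mem_map_of_mem (f := f) hsa⟩

theorem FinAway.finite (h : FinAway (∅ : Set (PrimeSpectrum R)) A) : Module.Finite R A := by
  obtain ⟨G, hG, h⟩ := h
  suffices G = ⊤ from ⟨this ▸ hG⟩
  refine eq_top_iff.2 fun z _ => ?_
  by_contra hz
  obtain ⟨m, hm, hle⟩ := Ideal.exists_le_maximal (G.colon {z}) (by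
    rw [Ideal.ne_top_iff_one]
    simpa [Submodule.mem_colon_singleton] using hz)
  obtain ⟨s, hs, hsz⟩ := h ⟨m, hm.isPrime⟩ (by simp) z
  exact hs (hle (Submodule.mem_colon_singleton.2 hsz))

theorem SocleFinAway.of_finite [Module.Finite R A] : SocleFinAway W 𝔞 A := fun _ =>
  ⟨⊤, Module.Finite.fg_top, fun p _ z _ => ⟨1, p.asIdeal.one_notMem, by simp⟩⟩

theorem SocleFinAway.of_surjective (f : A →ₗ[R] B) (hf : Function.Surjective f)
    (h : SocleFinAway W 𝔞 A) : SocleFinAway W 𝔞 B := by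
  intro Y
  obtain ⟨G, hG, h⟩ := h (Y.comap f)
  refine ⟨G.map f, hG.map f, fun p hp z hz => ?_⟩
  obtain ⟨a, rfl⟩ := hf z
  obtain ⟨s, hs, hsa⟩ := h p hp a (by simpa using hz)
  refine ⟨s, hs, ?_⟩
  have := Submodule.mem_map_of_mem (f := f) hsa
  rw [Submodule.map_sup, map_smul] at this
  exact sup_le_sup_left (Submodule.map_comap_le f Y) _ this

variable [IsNoetherianRing R]

theorem fg_inf_of_fg {G : Submodule R A} (hG : G.FG)
    (H : Submodule R A) : (G ⊓ H).FG := by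
  have := isNoetherian_of_fg_of_noetherian G hG
  exact (isNoetherian_submodule.1 this) _ inf_le_left

theorem fg_comap_of_injective {f : A →ₗ[R] B} (hf : Function.Injective f) {G : Submodule R B}
    (hG : G.FG) : (G.comap f).FG := by
  refine Submodule.fg_of_fg_map_injective f hf ?_
  rw [Submodule.map_comap_eq, inf_comm]
  exact fg_inf_of_fg hG _

theorem FinAway.of_injective (f : A →ₗ[R] B) (hf : Function.Injective f) (h : FinAway W B) :
    FinAway W A := by
  obtain ⟨G, hG, h⟩ := h
  exact ⟨G.comap f, fg_comap_of_injective hf hG, fun p hp z =>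
    (h p hp (f z)).imp fun s hs => ⟨hs.1, by simpa using hs.2⟩⟩

omit [IsNoetherianRing R] in
theorem exists_fg_le_map_eq {g : B →ₗ[R] C} {Z : Submodule R B} {T : Submodule R C} (hT : T.FG)
    (hTZ : T ≤ Z.map g) : ∃ L : Submodule R B, L.FG ∧ L ≤ Z ∧ L.map g = T := by
  classical
  obtain ⟨S, rfl⟩ := hT
  obtain ⟨S', hS', rfl⟩ := Finset.subset_set_image_iff.1
    (show (S : Set C) ⊆ g '' Z from fun x hx => hTZ (Submodule.subset_span hx))
  exact ⟨Submodule.span R S', ⟨S', rfl⟩, Submodule.span_le.2 hS', by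
    rw [Submodule.map_span, Finset.coe_image]⟩

theorem FinAway.of_exact (f : A →ₗ[R] B) (g : B →ₗ[R] C) (hfg : Function.Exact f g)
    (hA : FinAway W A) (hC : FinAway W C) : FinAway W B := by
  obtain ⟨G, hG, hA⟩ := hA
  obtain ⟨K, hK, hC⟩ := hC
  obtain ⟨L, hL, hLK⟩ : ∃ L : Submodule R B, L.FG ∧ L.map g = K ⊓ LinearMap.range g := by
    obtain ⟨L, hL, -, h⟩ := exists_fg_le_map_eq (g := g) (Z := ⊤)
      (fg_inf_of_fg hK (LinearMap.range g))
      (by rw [Submodule.map_top]; exact inf_le_right)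
    exact ⟨L, hL, h⟩
  refine ⟨G.map f ⊔ L, (hG.map f).sup hL, fun p hp z => ?_⟩
  obtain ⟨s, hs, hsz⟩ := hC p hp (g z)
  have : s • g z ∈ L.map g := hLK ▸ ⟨hsz, s • z, by simp⟩
  obtain ⟨l, hl, hlz⟩ := this
  obtain ⟨a, ha⟩ := (hfg (s • z - l)).1 (by simp [hlz])
  obtain ⟨t, ht, hta⟩ := hA p hp a
  refine ⟨t * s, fun h => (p.isPrime.mem_or_mem h).elim ht hs, ?_⟩
  have : (t * s) • z = f (t • a) + t • l := by
    rw [map_smul, ha, smul_sub, mul_smul]; abel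
  rw [this]
  exact add_mem (Submodule.mem_sup_left (Submodule.mem_map_of_mem hta))
    (Submodule.mem_sup_right (L.smul_mem _ hl))

theorem SocleFinAway.of_injective (f : A →ₗ[R] B) (hf : Function.Injective f)
    (h : SocleFinAway W 𝔞 B) : SocleFinAway W 𝔞 A := by
  intro Y
  obtain ⟨G, hG, h⟩ := h (Y.map f)
  refine ⟨G.comap f, fg_comap_of_injective hf hG, fun p hp z hz => ?_⟩
  obtain ⟨s, hs, hsz⟩ := h p hp (f z) fun r hr =>
    map_smul f r z ▸ Submodule.mem_map_of_mem (hz r hr)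
  obtain ⟨b, hb, _, ⟨y, hy, rfl⟩, e⟩ := Submodule.mem_sup.1 hsz
  refine ⟨s, hs, Submodule.mem_sup.2 ⟨s • z - y, ?_, y, hy, by simp⟩⟩
  rwa [Submodule.mem_comap, map_sub, map_smul, ← e, add_sub_cancel_right]

theorem SocleFinAway.of_exact (f : A →ₗ[R] B) (g : B →ₗ[R] C) (hfg : Function.Exact f g)
    (hA : SocleFinAway W 𝔞 A) (hC : SocleFinAway W 𝔞 C) : SocleFinAway W 𝔞 B := by
  intro Y
  obtain ⟨G, hG, hA⟩ := hA (Y.comap f)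
  obtain ⟨K, hK, hC⟩ := hC (Y.map g)
  let Z : Submodule R B := ⨅ r : 𝔞, Y.comap (LinearMap.lsmul R B r)
  have hZ : ∀ z, z ∈ Z ↔ ∀ r ∈ 𝔞, r • z ∈ Y := by simp [Z]
  have hYZ : Y ≤ Z := fun y hy => (hZ y).2 fun r _ => Y.smul_mem r hy
  obtain ⟨L, hL, hLZ, hLK⟩ := exists_fg_le_map_eq (g := g) (Z := Z) (fg_inf_of_fg hK (Z.map g))
    inf_le_right
  refine ⟨G.map f ⊔ L, (hG.map f).sup hL, fun p hp z hz => ?_⟩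
  obtain ⟨s, hs, hsz⟩ := hC p hp (g z) fun r hr =>
    map_smul g r z ▸ Submodule.mem_map_of_mem (hz r hr)
  obtain ⟨k, hk, _, ⟨y, hy, rfl⟩, e⟩ := Submodule.mem_sup.1 hsz
  have hszy : s • z - y ∈ Z := sub_mem (Z.smul_mem s ((hZ z).2 hz)) (hYZ hy)
  have hk' : k = g (s • z - y) := by rw [map_sub, map_smul, ← e, add_sub_cancel_right]
  obtain ⟨l, hl, hlk⟩ : k ∈ L.map g := hLK ▸ ⟨hk, _, hszy, hk'.symm⟩
  obtain ⟨a, ha⟩ := (hfg (s • z - y - l)).1 (by rw [map_sub, hlk, ← hk', sub_self])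
  have haZ : f a ∈ Z := ha ▸ sub_mem hszy (hLZ hl)
  obtain ⟨t, ht, hta⟩ := hA p hp a fun r hr => by
    simpa using (hZ _).1 haZ r hr
  refine ⟨t * s, fun h => (p.isPrime.mem_or_mem h).elim ht hs, ?_⟩
  have e' : (t * s) • z = f (t • a) + (t • l + t • y) := by
    rw [map_smul, ha, smul_sub, smul_sub, mul_smul]; abel
  rw [e', sup_assoc]
  have h1 := Submodule.mem_map_of_mem (f := f) hta
  rw [Submodule.map_sup] at h1
  have h2 : G.map f ⊔ (Y.comap f).map f ≤ G.map f ⊔ (L ⊔ Y) :=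
    sup_le_sup_left ((Submodule.map_comap_le f Y).trans le_sup_right) _
  exact add_mem (h2 h1) (Submodule.mem_sup_right
    (add_mem (Submodule.mem_sup_left (L.smul_mem t hl))
      (Submodule.mem_sup_right (Y.smul_mem t hy))))

end FinAway

section Artinian

theorem exists_forall_ge_eq_of_antitone {α : Type*} [PartialOrder α] [WellFoundedLT α]
    (f : ℕ → ℕ → α) (h₁ : ∀ t, Antitone fun i => f i t) (h₂ : ∀ i, Antitone (f i)) :
    ∃ n, ∀ i ≥ n, ∀ t, f i t = f n t := by
  have stab : ∀ g : ℕ → α, Antitone g → ∃ n, ∀ i ≥ n, g i = g n := by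
    intro g hg
    obtain ⟨n, hn⟩ := WellFoundedGT.monotone_chain_condition (α := αᵒᵈ)
      ⟨fun i => OrderDual.toDual (g i), hg⟩
    exact ⟨n, fun i hi => (hn i hi).symm⟩
  obtain ⟨n, hn⟩ := stab (fun i => f i i) fun i j hij => (h₁ j hij).trans (h₂ i hij)
  choose m hm using fun t => stab _ (h₁ t)
  refine ⟨n ⊔ (Finset.range n).sup m, fun i hi t => ?_⟩
  set N := n ⊔ (Finset.range n).sup m
  have hnN : n ≤ N := le_sup_left
  by_cases ht : t < n
  · have : m t ≤ N := (Finset.le_sup (Finset.mem_range.2 ht)).trans le_sup_right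
    rw [hm t i (this.trans hi), hm t N this]
  · have key : ∀ i ≥ n, f i t = f n n := fun i hi => by
      refine le_antisymm ((h₁ t hi).trans (h₂ n (not_lt.1 ht))) ?_
      rw [← hn (max i t) (hi.trans (le_max_left _ _))]
      exact (h₁ _ (le_max_left _ _)).trans (h₂ i (le_max_right _ _))
    rw [key i (hnN.trans hi), key N hnN]

variable {S A : Type*} [CommRing S] [AddCommGroup A] [Module S A]

theorem isArtinian_of_isArtinian_torsionBy (y : S) (hy : ∀ z : A, ∃ k : ℕ, y ^ k • z = 0)
    [IsArtinian S (Submodule.torsionBy S A y)] : IsArtinian S A := by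
  rw [← monotone_stabilizes_iff_artinian]
  intro Y
  let F : ℕ → ℕ → Submodule S (Submodule.torsionBy S A y) := fun i t =>
    ((OrderDual.ofDual (Y i)).map (LinearMap.lsmul S A (y ^ t))).comap (Submodule.subtype _)
  have hF : ∀ i t (z : Submodule.torsionBy S A y), z ∈ F i t ↔
      ∃ w ∈ OrderDual.ofDual (Y i), y ^ t • w = z := fun i t z => by simp [F]
  obtain ⟨n, hn⟩ := exists_forall_ge_eq_of_antitone F
    (fun t i j hij z hz => by
      obtain ⟨w, hw, e⟩ := (hF _ _ _).1 hz
      exact (hF _ _ _).2 ⟨w, Y.2 hij hw, e⟩)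
    (fun i => antitone_nat_of_succ_le fun t z hz => by
      obtain ⟨w, hw, e⟩ := (hF _ _ _).1 hz
      exact (hF _ _ _).2 ⟨y • w, Submodule.smul_mem _ _ hw, by rw [← e, pow_succ, mul_smul]⟩)
  refine ⟨n, fun m hm => le_antisymm (Y.2 hm) ?_⟩
  suffices ∀ k, ∀ z ∈ OrderDual.ofDual (Y n), y ^ k • z = 0 → z ∈ OrderDual.ofDual (Y m) from
    fun z hz => (hy z).elim fun k hk => this k z hz hk
  intro k
  induction k with
  | zero => intro z _ hz; simp only [pow_zero, one_smul] at hz; simp [hz]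
  | succ k ih =>
    intro z hz hk
    have : (⟨y ^ k • z, by rwa [Submodule.mem_torsionBy_iff, ← mul_smul, ← pow_succ']⟩ :
        Submodule.torsionBy S A y) ∈ F m k := hn m hm k ▸ (hF _ _ _).2 ⟨z, hz, rfl⟩
    obtain ⟨w, hw, e⟩ := (hF _ _ _).1 this
    have := ih (z - w) (sub_mem hz (Y.2 hm hw)) (by rw [smul_sub, e, sub_self])
    simpa using add_mem this hw

theorem isArtinian_of_isArtinian_torsionBySet (s : Finset S)
    (hs : ∀ y ∈ s, ∀ z : A, ∃ k : ℕ, y ^ k • z = 0)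
    [IsArtinian S (Submodule.torsionBySet S A s)] : IsArtinian S A := by
  classical
  rename_i hA
  induction s using Finset.induction_on generalizing hA with
  | empty =>
    refine isArtinian_of_injective (P := Submodule.torsionBySet S A (∅ : Finset S))
      (LinearMap.codRestrict _ LinearMap.id fun z => ?_) fun a b h => congrArg Subtype.val h
    simp [Submodule.mem_torsionBySet_iff]
  | insert y s _ ih =>
    have : IsArtinian S (Submodule.torsionBySet S A s) := by
      have : IsArtinian S (Submodule.torsionBy S (Submodule.torsionBySet S A s) y) := by
        refine isArtinian_of_injective (P := Submodule.torsionBySet S A (insert y s : Finset S))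
          (LinearMap.codRestrict _ (Submodule.subtype _ ∘ₗ Submodule.subtype _) fun z => ?_)
          fun a b h => by
            have := congrArg Subtype.val h
            exact Subtype.ext (Subtype.ext this)
        rw [Submodule.mem_torsionBySet_iff]
        rintro ⟨a, ha⟩
        obtain rfl | ha := Finset.mem_insert.1 ha
        · exact congrArg Subtype.val ((Submodule.mem_torsionBy_iff _ _).1 z.2)
        · exact (Submodule.mem_torsionBySet_iff _ _).1 z.1.2 ⟨a, ha⟩
      exact isArtinian_of_isArtinian_torsionBy y fun z => by
        obtain ⟨k, hk⟩ := hs y (by simp) z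
        exact ⟨k, Subtype.ext hk⟩
    exact ih fun y hy => hs y (by simp [hy])

theorem isArtinian_of_finite_torsionBySet_maximalIdeal [IsNoetherianRing S] [IsLocalRing S]
    (h : ∀ y ∈ IsLocalRing.maximalIdeal S, ∀ z : A, ∃ k : ℕ, y ^ k • z = 0)
    [Module.Finite S (Submodule.torsionBySet S A (IsLocalRing.maximalIdeal S))] :
    IsArtinian S A := by
  obtain ⟨s, hs⟩ := (IsLocalRing.maximalIdeal S).fg_of_isNoetherianRing
  let V := Submodule.torsionBySet S A (IsLocalRing.maximalIdeal S)
  have hV : Module.IsTorsionBySet S V (IsLocalRing.maximalIdeal S) :=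
    Submodule.torsionBySet_isTorsionBySet _
  let := hV.module
  have : IsScalarTower S (S ⧸ IsLocalRing.maximalIdeal S) V := hV.isScalarTower
  let := Ideal.Quotient.field (IsLocalRing.maximalIdeal S)
  have : Module.Finite (S ⧸ IsLocalRing.maximalIdeal S) V :=
    Module.Finite.of_restrictScalars_finite S _ _
  have : IsArtinian S V := isArtinian_of_surjective_algebraMap
    (R := S ⧸ IsLocalRing.maximalIdeal S) Ideal.Quotient.mk_surjective
  have : IsArtinian S (Submodule.torsionBySet S A s) := by
    rw [Submodule.torsionBySet_eq_torsionBySet_span]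
    exact hs ▸ this
  exact isArtinian_of_isArtinian_torsionBySet s fun y hy =>
    h y (hs ▸ Ideal.subset_span hy)

/-- An Artinian module `A` and an ideal `𝔟` admit finitely many primes not containing `𝔟` such
that any `x ∈ 𝔟` outside them satisfies `𝔟 ^ k A ⊆ x A` for some `k`. -/
theorem exists_finite_primes_of_isArtinian [IsNoetherianRing S] [IsArtinian S A] (𝔟 : Ideal S) :
    ∃ Q : Set (Ideal S), Q.Finite ∧ (∀ q ∈ Q, q.IsPrime ∧ ¬ 𝔟 ≤ q) ∧
      ∀ x ∈ 𝔟, (∀ q ∈ Q, x ∉ q) → ∃ k : ℕ, ∀ y ∈ 𝔟 ^ k, ∀ z : A, ∃ w : A, y • z = x • w := by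
  suffices ∀ P : Submodule S A, ∃ Q : Set (Ideal S), Q.Finite ∧ (∀ q ∈ Q, q.IsPrime ∧ ¬ 𝔟 ≤ q) ∧
      ∀ x ∈ 𝔟, (∀ q ∈ Q, x ∉ q) → ∃ k : ℕ, ∀ y ∈ 𝔟 ^ k, ∀ z ∈ P, ∃ w ∈ P, y • z = x • w by
    simpa using this ⊤
  intro P
  induction P using WellFoundedLT.induction with
  | ind P ih =>
  by_cases hsum : ∃ P₁ P₂ : Submodule S A, P₁ < P ∧ P₂ < P ∧ P₁ ⊔ P₂ = P
  · obtain ⟨P₁, P₂, h₁, h₂, rfl⟩ := hsum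
    obtain ⟨Q₁, f₁, q₁, H₁⟩ := ih _ h₁
    obtain ⟨Q₂, f₂, q₂, H₂⟩ := ih _ h₂
    refine ⟨Q₁ ∪ Q₂, f₁.union f₂, fun q hq => hq.elim (q₁ q) (q₂ q), fun x hx hxq => ?_⟩
    obtain ⟨k₁, H₁⟩ := H₁ x hx fun q hq => hxq q (.inl hq)
    obtain ⟨k₂, H₂⟩ := H₂ x hx fun q hq => hxq q (.inr hq)
    refine ⟨max k₁ k₂, fun y hy z hz => ?_⟩
    obtain ⟨z₁, hz₁, z₂, hz₂, rfl⟩ := Submodule.mem_sup.1 hz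
    obtain ⟨w₁, hw₁, e₁⟩ := H₁ y (Ideal.pow_le_pow_right (le_max_left _ _) hy) z₁ hz₁
    obtain ⟨w₂, hw₂, e₂⟩ := H₂ y (Ideal.pow_le_pow_right (le_max_right _ _) hy) z₂ hz₂
    exact ⟨w₁ + w₂, add_mem (Submodule.mem_sup_left hw₁) (Submodule.mem_sup_right hw₂), by
      rw [smul_add, smul_add, e₁, e₂]⟩
  -- every scalar is surjective or nilpotent on a sum-irreducible module
  have key : ∀ x : S, (∀ z ∈ P, ∃ w ∈ P, z = x • w) ∨ ∃ k : ℕ, ∀ z ∈ P, x ^ k • z = 0 := by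
    intro x
    obtain ⟨n, hn⟩ := IsArtinian.monotone_stabilizes (R := S) (M := A)
      ⟨fun k => OrderDual.toDual (P.map (LinearMap.lsmul S A (x ^ k))), fun i j hij => by
        rintro _ ⟨z, hz, rfl⟩
        obtain ⟨c, rfl⟩ := Nat.exists_eq_add_of_le hij
        exact ⟨x ^ c • z, P.smul_mem _ hz, by simp [← mul_smul, pow_add, mul_comm]⟩⟩
    replace hn : ∀ m ≥ n, ∀ z ∈ P, ∃ w ∈ P, x ^ m • w = x ^ n • z := fun m hm z hz => by
      have : x ^ n • z ∈ P.map (LinearMap.lsmul S A (x ^ m)) := by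
        have e := hn m hm
        change P.map _ = P.map _ at e
        exact e ▸ ⟨z, hz, rfl⟩
      simpa using this
    by_contra! hx
    obtain ⟨⟨z, hz, hzx⟩, hnil⟩ := hx
    obtain ⟨z', hz', hzn⟩ := hnil n
    refine hsum ⟨P.map (LinearMap.lsmul S A x), P ⊓ LinearMap.ker (LinearMap.lsmul S A (x ^ n)),
      lt_of_le_of_ne ?_ ?_, lt_of_le_of_ne inf_le_left ?_, le_antisymm (sup_le ?_ inf_le_left) ?_⟩
    · rintro _ ⟨w, hw, rfl⟩
      exact P.smul_mem x hw
    · intro e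
      obtain ⟨w, hw, e⟩ := e.symm ▸ hz
      exact hzx w hw e.symm
    · intro e
      exact hzn ((e.symm ▸ hz' : z' ∈ P ⊓ LinearMap.ker (LinearMap.lsmul S A (x ^ n))).2)
    · rintro _ ⟨w, hw, rfl⟩
      exact P.smul_mem x hw
    · intro z hz
      obtain ⟨w, hw, e⟩ := hn (n + 1) (by omega) z hz
      refine Submodule.mem_sup.2 ⟨x • w, ⟨w, hw, rfl⟩, z - x • w,
        ⟨sub_mem hz (P.smul_mem x hw), ?_⟩, by simp⟩
      simp [smul_sub, ← e, ← mul_smul, pow_succ]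
  by_cases hP : ∀ z ∈ P, z = 0
  · exact ⟨∅, by simp, by simp, fun x _ _ => ⟨0, fun y _ z hz => ⟨0, by simp, by simp [hP z hz]⟩⟩⟩
  let q : Ideal S := (Module.annihilator S P).radical
  have hq : ∀ x, x ∈ q ↔ ∃ k : ℕ, ∀ z ∈ P, x ^ k • z = 0 := fun x => by
    simp [q, Ideal.mem_radical_iff, Module.mem_annihilator]
  by_cases hb : 𝔟 ≤ q
  · obtain ⟨k, hk⟩ := Ideal.exists_radical_pow_le_of_fg (Module.annihilator S P)
      (IsNoetherian.noetherian _)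
    refine ⟨∅, by simp, by simp, fun x _ _ => ⟨k, fun y hy z hz => ⟨0, by simp, ?_⟩⟩⟩
    have := Module.mem_annihilator.1 (hk (Ideal.pow_right_mono hb k hy)) ⟨z, hz⟩
    simpa using congrArg Subtype.val this
  · refine ⟨{q}, by simp, ?_, fun x _ hx => ⟨0, fun y _ z hz => ?_⟩⟩
    · rintro _ rfl
      refine ⟨⟨fun h => hP ?_, fun {x y} hxy => ?_⟩, hb⟩
      · simpa using (hq 1).1 (h ▸ trivial)
      · rw [or_iff_not_imp_right]
        intro hy
        obtain ⟨k, hk⟩ := (hq _).1 hxy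
        have hy := (key y).resolve_right fun h => hy ((hq y).2 h)
        have : ∀ k : ℕ, ∀ z ∈ P, ∃ w ∈ P, z = y ^ k • w := by
          intro k
          induction k with
          | zero => exact fun z hz => ⟨z, hz, by simp⟩
          | succ k ih =>
            intro z hz
            obtain ⟨w, hw, rfl⟩ := ih z hz
            obtain ⟨v, hv, rfl⟩ := hy w hw
            exact ⟨v, hv, by rw [pow_succ, mul_smul]⟩
        refine (hq x).2 ⟨k, fun z hz => ?_⟩
        obtain ⟨w, hw, rfl⟩ := this k z hz
        rw [← mul_smul, ← mul_pow, hk w hw]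
    · obtain ⟨w, hw, e⟩ := (key x).resolve_right (fun h => hx q rfl ((hq x).2 h)) (y • z)
        (P.smul_mem y hz)
      exact ⟨w, hw, e⟩

end Artinian

section Localization

variable {R : Type*} [CommRing R]

/-- The primes `p` such that every chain of primes starting at `p` has at most `n` members. -/
def cohtLT (R : Type*) [CommRing R] : ℕ → Set (PrimeSpectrum R)
  | 0 => ∅
  | n + 1 => {p | ∀ q, p < q → q ∈ cohtLT R n}

variable {N : Type*} [AddCommGroup N] [Module R N]

theorem exists_mul_pow_smul_eq_zero {p : PrimeSpectrum R} (hp : ∀ q ∈ Module.support R N, ¬ q < p)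
    {r : R} (hr : r ∈ p.asIdeal) (z : N) : ∃ k : ℕ, ∃ s ∉ p.asIdeal, (s * r ^ k) • z = 0 := by
  by_contra! h
  obtain ⟨q, hq, hzq, hdisj⟩ := Ideal.exists_le_prime_disjoint (Module.annihilator R (R ∙ z))
    (p.asIdeal.primeCompl ⊔ Submonoid.powers r) (Set.disjoint_left.2 fun x hx hx' => by
      obtain ⟨s, hs, _, ⟨k, rfl⟩, rfl⟩ := Submonoid.mem_sup.1 hx'
      exact h k s hs (by simpa [Submodule.mem_annihilator_span_singleton] using hx))
  refine hp ⟨q, hq⟩ (Module.mem_support_iff_exists_annihilator.2 ⟨z, hzq⟩) (lt_of_le_of_ne ?_ ?_)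
  · intro x hx
    by_contra hxp
    exact Set.disjoint_left.1 hdisj hx (Submonoid.mem_sup_left hxp)
  · rintro rfl
    exact Set.disjoint_left.1 hdisj hr (Submonoid.mem_sup_right (Submonoid.mem_powers r))

variable {𝔞 : Ideal R} {W : Set (PrimeSpectrum R)} {n : ℕ}

theorem torsion_le_of_torsionOf_eq {p : Ideal R} [p.IsPrime]
    (hN : ∀ z : N, ∃ k : ℕ, ∀ r ∈ 𝔞 ^ k, r • z = 0) {w : N} (hw : ∀ r : R, r • w = 0 ↔ r ∈ p) :
    𝔞 ≤ p := by
  obtain ⟨k, hk⟩ := hN w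
  exact Ideal.IsPrime.le_of_pow_le (n := k) fun r hr => (hw r).1 (hk r hr)

theorem not_lt_of_mem_support (hW : Module.support R N ⊆ cohtLT R (n + 1)) {p : PrimeSpectrum R}
    (hp : p ∉ cohtLT R n) : ∀ q ∈ Module.support R N, ¬ q < p :=
  fun _ hq hqp => hp (hW hq p hqp)

variable [IsNoetherianRing R]

theorem exists_torsionOf_eq_of_minimal_support {p : PrimeSpectrum R} (hpN : p ∈ Module.support R N)
    (hp : ∀ q ∈ Module.support R N, ¬ q < p) : ∃ w : N, ∀ r : R, r • w = 0 ↔ r ∈ p.asIdeal := by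
  obtain ⟨z, hz⟩ := Module.mem_support_iff_exists_annihilator.1 hpN
  have hmin : p.asIdeal ∈ (Module.annihilator R (R ∙ z)).minimalPrimes := by
    refine ⟨⟨p.isPrime, hz⟩, fun q hq hqp => ?_⟩
    by_contra hpq
    exact hp ⟨q, hq.1⟩ (Module.mem_support_iff_exists_annihilator.2 ⟨z, hq.2⟩) ⟨hqp, hpq⟩
  obtain ⟨-, w, hw⟩ := (Submodule.isAssociatedPrime_iff (N := (⊥ : Submodule R (R ∙ z)))).1
    (Module.associatedPrimes.minimalPrimes_annihilator_subset_associatedPrimes R _ hmin)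
  refine ⟨w, fun r => ?_⟩
  rw [hw, Submodule.mem_colon_singleton]
  simp [Subtype.ext_iff]

theorem exists_forall_smul_smul_mem {p I : Ideal R} [p.IsPrime] {Y : Submodule R N} {z : N}
    (h : ∀ r ∈ I, ∃ s ∉ p, s • r • z ∈ Y) : ∃ s ∉ p, ∀ r ∈ I, s • r • z ∈ Y := by
  classical
  obtain ⟨S, hS⟩ := I.fg_of_isNoetherianRing
  have hSI : ∀ r ∈ S, r ∈ I := fun r hr => hS ▸ Ideal.subset_span hr
  choose! f hf hfY using fun r hr => h r (hSI r hr)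
  refine ⟨∏ r ∈ S, f r, fun hmem => ?_, fun r hr => ?_⟩
  · obtain ⟨r, hr, hrp⟩ := (Ideal.IsPrime.prod_mem_iff (hp := ‹p.IsPrime›)).1 hmem
    exact hf r hr hrp
  · rw [← hS] at hr
    induction hr using Submodule.span_induction with
    | mem x hx =>
      rw [← Finset.mul_prod_erase S f hx, mul_comm, mul_smul]
      exact Y.smul_mem _ (hfY x hx)
    | zero => simp
    | add x y _ _ hx hy => rw [add_smul, smul_add]; exact add_mem hx hy
    | smul a x _ hx =>
      rw [smul_eq_mul, mul_smul, smul_comm]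
      exact Y.smul_mem _ hx

theorem finite_support_diff (hN : ∀ z : N, ∃ k : ℕ, ∀ r ∈ 𝔞 ^ k, r • z = 0)
    (hW : Module.support R N ⊆ cohtLT R (n + 1)) {G : Submodule R N} (hG : G.FG)
    (h : ∀ p ∉ cohtLT R n, ∀ z : N, (∀ r ∈ 𝔞, r • z = 0) → ∃ s ∉ p.asIdeal, s • z ∈ G) :
    (Module.support R N \ cohtLT R n).Finite := by
  have hfin := (Module.annihilator R G).finite_minimalPrimes_of_isNoetherianRing
  refine Set.Finite.of_finite_image (hfin.subset ?_) fun p _ q _ e => PrimeSpectrum.ext e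
  rintro _ ⟨p, ⟨hpN, hpW⟩, rfl⟩
  have hmin := not_lt_of_mem_support hW hpW
  obtain ⟨w, hw⟩ := exists_torsionOf_eq_of_minimal_support hpN hmin
  have hap := torsion_le_of_torsionOf_eq hN hw
  obtain ⟨s, hs, hsG⟩ := h p hpW w fun r hr => (hw r).2 (hap hr)
  refine ⟨⟨p.isPrime, fun r hr => ?_⟩, fun q hq hqp => ?_⟩
  · have := congrArg Subtype.val (Module.mem_annihilator.1 hr ⟨_, hsG⟩)
    have : (r * s) • w = 0 := by simpa [mul_smul] using this
    exact (p.isPrime.mem_or_mem ((hw _).1 this)).resolve_right hs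
  · by_contra hpq
    have : Module.Finite R G := ⟨(Submodule.fg_top G).2 hG⟩
    have hqG : (⟨q, hq.1⟩ : PrimeSpectrum R) ∈ Module.support R G := by
      rw [Module.support_eq_zeroLocus]; exact hq.2
    exact hmin ⟨q, hq.1⟩ (Module.support_subset_of_injective G.subtype G.injective_subtype hqG)
      ⟨hqp, hpq⟩

theorem isArtinian_localizedModule (hN : ∀ z : N, ∃ k : ℕ, ∀ r ∈ 𝔞 ^ k, r • z = 0)
    (hW : Module.support R N ⊆ cohtLT R (n + 1)) {G : Submodule R N} (hG : G.FG)
    (h : ∀ p ∉ cohtLT R n, ∀ z : N, (∀ r ∈ 𝔞, r • z = 0) → ∃ s ∉ p.asIdeal, s • z ∈ G)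
    {p : PrimeSpectrum R} (hp : p ∈ Module.support R N \ cohtLT R n) :
    IsArtinian (Localization.AtPrime p.asIdeal) (LocalizedModule p.asIdeal.primeCompl N) := by
  have hmin := not_lt_of_mem_support hW hp.2
  obtain ⟨w, hw⟩ := exists_torsionOf_eq_of_minimal_support hp.1 hmin
  have hap := torsion_le_of_torsionOf_eq hN hw
  have : IsNoetherianRing (Localization.AtPrime p.asIdeal) :=
    IsLocalization.isNoetherianRing p.asIdeal.primeCompl _ inferInstance
  have : Module.Finite (Localization.AtPrime p.asIdeal) (Submodule.torsionBySet
      (Localization.AtPrime p.asIdeal) (LocalizedModule p.asIdeal.primeCompl N)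
      (IsLocalRing.maximalIdeal (Localization.AtPrime p.asIdeal))) := by
    have hG' : (Submodule.span (Localization.AtPrime p.asIdeal)
        (LocalizedModule.mkLinearMap p.asIdeal.primeCompl N '' G)).FG := by
      obtain ⟨S, rfl⟩ := hG
      refine Submodule.fg_def.2 ⟨LocalizedModule.mkLinearMap p.asIdeal.primeCompl N '' S,
        S.finite_toSet.image _, ?_⟩
      rw [← Submodule.map_coe, Submodule.map_span, Submodule.span_span_of_tower]
    have := isNoetherian_of_fg_of_noetherian _ hG'
    refine ⟨(Submodule.fg_top _).2 (isNoetherian_submodule.1 this _ fun z hz => ?_)⟩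
    induction z using LocalizedModule.induction_on with | h z t => 
    obtain ⟨s, hs, hsz⟩ := exists_forall_smul_smul_mem (I := p.asIdeal) (p := p.asIdeal)
      (Y := ⊥) (z := z) fun r hr => by
        have := (Submodule.mem_torsionBySet_iff _ _).1 hz
          ⟨algebraMap R _ r, IsLocalization.AtPrime.to_map_mem_maximal_iff _ p.asIdeal r |>.2 hr⟩
        rw [Subtype.coe_mk, algebraMap_smul, LocalizedModule.smul'_mk,
          ← LocalizedModule.zero_mk t, LocalizedModule.mk_eq] at this
        obtain ⟨u, hu⟩ := this
        exact ⟨u * t, (u * t).2, by simpa [mul_smul, Submonoid.smul_def] using hu⟩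
    obtain ⟨s', hs', hsG⟩ := h p hp.2 (s • z) fun r hr => by
      simpa [smul_comm r s] using hsz r (hap hr)
    have e : LocalizedModule.mk z t = Localization.mk 1 (⟨s' * s, fun h =>
        (p.isPrime.mem_or_mem h).elim hs' hs⟩ * t : p.asIdeal.primeCompl) •
        LocalizedModule.mkLinearMap p.asIdeal.primeCompl N (s' • s • z) := by
      rw [LocalizedModule.mkLinearMap_apply, LocalizedModule.mk_smul_mk, one_smul, mul_one,
        LocalizedModule.mk_eq]
      exact ⟨1, by simp [mul_smul, Submonoid.smul_def, smul_comm (t : R)]⟩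
    rw [e]
    exact Submodule.smul_mem _ _ (Submodule.subset_span ⟨_, hsG, rfl⟩)
  refine isArtinian_of_finite_torsionBySet_maximalIdeal fun y hy z => ?_
  induction z using LocalizedModule.induction_on with | h z t => 
  obtain ⟨r, u, rfl⟩ := IsLocalization.exists_mk'_eq p.asIdeal.primeCompl y
  have hr : r ∈ p.asIdeal := (IsLocalization.AtPrime.mk'_mem_maximal_iff _ p.asIdeal r u).1 hy
  obtain ⟨k, s, hs, hk⟩ := exists_mul_pow_smul_eq_zero hmin hr z
  refine ⟨k, ?_⟩
  rw [← Localization.mk_eq_mk', Localization.mk_pow, LocalizedModule.mk_smul_mk,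
    ← LocalizedModule.zero_mk 1, LocalizedModule.mk_eq]
  exact ⟨⟨s, hs⟩, by simpa [Submonoid.smul_def, mul_smul] using hk⟩

end Localization

section SocleCriterion

variable {R : Type*} [CommRing R] {N : Type*} [AddCommGroup N] [Module R N]
  {𝔞 : Ideal R} {W : Set (PrimeSpectrum R)} {n : ℕ} {x : R}

theorem exists_fg_support_quotient_subset (h : FinAway W N) :
    ∃ G : Submodule R N, G.FG ∧ Module.support R (N ⧸ G) ⊆ W := by
  obtain ⟨G, hG, h⟩ := h
  refine ⟨G, hG, fun p hp => ?_⟩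
  by_contra hpW
  refine Module.notMem_support_iff'.2 (fun z => ?_) hp
  obtain ⟨z, rfl⟩ := Submodule.Quotient.mk_surjective _ z
  obtain ⟨s, hs, hsz⟩ := h p hpW z
  exact ⟨s, hs, (Submodule.Quotient.mk_eq_zero _).2 hsz⟩

theorem torsion_quotient (hN : ∀ z : N, ∃ k : ℕ, ∀ r ∈ 𝔞 ^ k, r • z = 0) (G : Submodule R N) :
    ∀ z : N ⧸ G, ∃ k : ℕ, ∀ r ∈ 𝔞 ^ k, r • z = 0 := fun z => by
  obtain ⟨z, rfl⟩ := Submodule.Quotient.mk_surjective _ z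
  obtain ⟨k, hk⟩ := hN z
  exact ⟨k, fun r hr => by rw [← Submodule.Quotient.mk_smul, hk r hr, Submodule.Quotient.mk_zero]⟩

variable [IsNoetherianRing R]

theorem SocleFinAway.torsionBy_pow (h : SocleFinAway W 𝔞 (Submodule.torsionBy R N x)) (k : ℕ) :
    SocleFinAway W 𝔞 (Submodule.torsionBy R N (x ^ k)) := by
  induction k with
  | zero =>
    refine .of_injective (LinearMap.codRestrict _ (Submodule.subtype _) fun z => ?_) ?_ h
    · have := (Submodule.mem_torsionBy_iff _ _).1 z.2
      simp_all
    · intro a b e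
      exact Subtype.ext (congrArg (fun z : Submodule.torsionBy R N x => (z : N)) e)
  | succ k ih =>
    have h₁ : Submodule.torsionBy R N x ≤ Submodule.torsionBy R N (x ^ (k + 1)) := fun z hz => by
      rw [Submodule.mem_torsionBy_iff] at hz ⊢
      rw [pow_succ, mul_smul, hz, smul_zero]
    have h₂ : ∀ z ∈ Submodule.torsionBy R N (x ^ (k + 1)),
        LinearMap.lsmul R N x z ∈ Submodule.torsionBy R N (x ^ k) := fun z hz => by
      rw [Submodule.mem_torsionBy_iff] at hz ⊢
      rwa [LinearMap.lsmul_apply, ← mul_smul, ← pow_succ]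
    refine .of_exact (Submodule.inclusion h₁) ((LinearMap.lsmul R N x).restrict h₂)
      (fun z => ⟨fun hz => ?_, ?_⟩) h ih
    · exact ⟨⟨z, congrArg Subtype.val hz⟩, rfl⟩
    · rintro ⟨w, rfl⟩
      exact Subtype.ext w.2

theorem SocleFinAway.exists_fg_pow (h : SocleFinAway W 𝔞 N) (k : ℕ) (Y : Submodule R N) :
    ∃ G : Submodule R N, G.FG ∧ ∀ p ∉ W, ∀ z : N, (∀ r ∈ 𝔞 ^ k, ∃ s ∉ p.asIdeal, s • r • z ∈ Y) →
      ∃ s ∉ p.asIdeal, s • z ∈ G ⊔ Y := by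
  suffices ∀ Y : Submodule R N, ∃ G : Submodule R N, G.FG ∧ ∀ p ∉ W, ∀ z : N,
      (∀ r ∈ 𝔞 ^ k, r • z ∈ Y) → ∃ s ∉ p.asIdeal, s • z ∈ G ⊔ Y by
    obtain ⟨G, hG, H⟩ := this Y
    refine ⟨G, hG, fun p hp z hz => ?_⟩
    obtain ⟨s, hs, hsz⟩ := exists_forall_smul_smul_mem hz
    obtain ⟨t, ht, htz⟩ := H p hp (s • z) fun r hr => by rw [smul_comm]; exact hsz r hr
    exact ⟨t * s, fun h => (p.isPrime.mem_or_mem h).elim ht hs, by rwa [mul_smul]⟩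
  clear Y
  induction k with
  | zero => exact fun Y => ⟨⊥, Submodule.fg_bot, fun p _ z hz =>
      ⟨1, p.asIdeal.one_notMem, by simpa using hz 1 (by simp)⟩⟩
  | succ k ih =>
    intro Y
    let Z : Submodule R N := ⨅ r : 𝔞, Y.comap (LinearMap.lsmul R N r)
    have hZ : ∀ z, z ∈ Z ↔ ∀ r ∈ 𝔞, r • z ∈ Y := by simp [Z]
    obtain ⟨G₁, hG₁, H₁⟩ := ih Z
    obtain ⟨G₂, hG₂, H₂⟩ := h Y
    refine ⟨G₁ ⊔ G₂, hG₁.sup hG₂, fun p hp z hz => ?_⟩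
    obtain ⟨s, hs, hsz⟩ := H₁ p hp z fun r hr => (hZ _).2 fun r' hr' => by
      rw [← mul_smul]; exact hz _ (pow_succ' 𝔞 k ▸ Ideal.mul_mem_mul hr' hr)
    obtain ⟨g, hg, y, hy, e⟩ := Submodule.mem_sup.1 hsz
    obtain ⟨t, ht, hty⟩ := H₂ p hp y ((hZ y).1 hy)
    refine ⟨t * s, fun h => (p.isPrime.mem_or_mem h).elim ht hs, ?_⟩
    rw [mul_smul, ← e, smul_add, sup_assoc]
    exact add_mem (Submodule.mem_sup_left (G₁.smul_mem t hg)) (Submodule.mem_sup_right hty)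

theorem SocleFinAway.of_torsionBy_of_support_subset (hx : x ∈ 𝔞)
    (hN : ∀ z : N, ∃ k : ℕ, ∀ r ∈ 𝔞 ^ k, r • z = 0)
    (hW : Module.support R N ⊆ cohtLT R (n + 1))
    (h : SocleFinAway (cohtLT R n) 𝔞 (Submodule.torsionBy R N x)) :
    SocleFinAway (cohtLT R n) 𝔞 N := by
  intro Y
  obtain ⟨G₀, hG₀, H₀⟩ := h ⊥
  have H : ∀ p ∉ cohtLT R n, ∀ z : N, (∀ r ∈ 𝔞, r • z = 0) →
      ∃ s ∉ p.asIdeal, s • z ∈ G₀.map (Submodule.subtype _) := fun p hp z hz => by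
    obtain ⟨s, hs, hsz⟩ := H₀ p hp ⟨z, hz x hx⟩ fun r hr => by
      simpa [Subtype.ext_iff] using hz r hr
    rw [sup_bot_eq] at hsz
    exact ⟨s, hs, _, hsz, rfl⟩
  let Z : Submodule R N := ⨅ r : 𝔞, Y.comap (LinearMap.lsmul R N r)
  have hZ : ∀ z, z ∈ Z ↔ ∀ r ∈ 𝔞, r • z ∈ Y := by simp [Z]
  have hYZ : Y ≤ Z := fun y hy => (hZ y).2 fun r _ => Y.smul_mem r hy
  have hfin := finite_support_diff hN hW (hG₀.map _) H
  have key : ∀ p ∈ Module.support R N \ cohtLT R n, ∃ k : ℕ, ∀ z ∈ Z, ∃ s ∉ p.asIdeal, ∃ y ∈ Y,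
      x ^ k • (s • z - y) = 0 := by
    intro p hp
    have := isArtinian_localizedModule hN hW (hG₀.map _) H hp
    obtain ⟨k, hk⟩ := IsArtinian.monotone_stabilizes
      (R := Localization.AtPrime p.asIdeal) (M := LocalizedModule p.asIdeal.primeCompl N)
      ⟨fun k => OrderDual.toDual ((Z.map (LinearMap.lsmul R N (x ^ k))).localized
        p.asIdeal.primeCompl), fun i j hij => by
        refine (Submodule.localized'gi (Localization.AtPrime p.asIdeal) p.asIdeal.primeCompl
          (LocalizedModule.mkLinearMap p.asIdeal.primeCompl N)).gc.monotone_l ?_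
        rintro _ ⟨z, hz, rfl⟩
        obtain ⟨c, rfl⟩ := Nat.exists_eq_add_of_le hij
        exact ⟨x ^ c • z, Z.smul_mem _ hz, by simp [← mul_smul, pow_add, mul_comm]⟩⟩
    refine ⟨k, fun z hz => ?_⟩
    have hmem : IsLocalizedModule.mk' (LocalizedModule.mkLinearMap p.asIdeal.primeCompl N)
        (x ^ k • z) (1 : p.asIdeal.primeCompl) ∈
          (Z.map (LinearMap.lsmul R N (x ^ (k + 1)))).localized p.asIdeal.primeCompl := by
      have e := hk (k + 1) k.le_succ
      change Submodule.localized _ _ = Submodule.localized _ _ at e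
      rw [← e]
      exact ⟨_, ⟨z, hz, rfl⟩, 1, rfl⟩
    obtain ⟨_, ⟨z', hz', rfl⟩, s, e⟩ := hmem
    obtain ⟨u, hu⟩ := (IsLocalizedModule.mk'_eq_mk'_iff _ _ _ _ _).1 e
    refine ⟨u * s, (u * s).2, (u : R) • x • z', Y.smul_mem _ ((hZ z').1 hz' x hx), ?_⟩
    rw [one_smul] at hu
    simp only [LinearMap.lsmul_apply, Submonoid.smul_def, ← mul_smul] at hu ⊢
    rw [smul_sub, sub_eq_zero, ← mul_smul, ← mul_smul]
    convert hu using 2 <;> ring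
  choose! k hk using key
  let K := hfin.toFinset.sup k
  have key : ∀ p ∉ cohtLT R n, ∀ z ∈ Z, ∃ s ∉ p.asIdeal, ∃ y ∈ Y, x ^ K • (s • z - y) = 0 := by
    intro p hp z hz
    by_cases hpN : p ∈ Module.support R N
    · obtain ⟨s, hs, y, hy, e⟩ := hk p ⟨hpN, hp⟩ z hz
      obtain ⟨c, hc⟩ := Nat.exists_eq_add_of_le
        (Finset.le_sup (f := k) (hfin.mem_toFinset.2 ⟨hpN, hp⟩))
      exact ⟨s, hs, y, hy, by
        rw [show K = k p + c from hc, add_comm, pow_add, mul_smul, e, smul_zero]⟩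
    · obtain ⟨s, hs, e⟩ := Module.notMem_support_iff'.1 hpN z
      exact ⟨s, hs, 0, Y.zero_mem, by rw [e, sub_zero, smul_zero]⟩
  obtain ⟨G, hG, HG⟩ := h.torsionBy_pow K (Y.comap (Submodule.subtype _))
  refine ⟨G.map (Submodule.subtype _), hG.map _, fun p hp z hz => ?_⟩
  obtain ⟨s, hs, y, hy, e⟩ := key p hp z ((hZ z).2 hz)
  obtain ⟨t, ht, htG⟩ := HG p hp ⟨s • z - y, e⟩
    ((hZ _).1 (sub_mem (Z.smul_mem s ((hZ z).2 hz)) (hYZ hy)))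
  have := Submodule.mem_map_of_mem (f := Submodule.subtype _) htG
  rw [Submodule.map_sup] at this
  have := sup_le_sup_left (Submodule.map_comap_le (Submodule.subtype _) Y) _ this
  refine ⟨t * s, fun h => (p.isPrime.mem_or_mem h).elim ht hs, ?_⟩
  have e' : (t * s) • z = t • (s • z - y) + t • y := by rw [smul_sub, mul_smul]; abel
  rw [e']
  exact add_mem this (Submodule.mem_sup_right (Y.smul_mem t hy))

/-- If the kernel of some `x ∈ 𝔞` on an `𝔞`-torsion module `N` is `SocleFinAway`, so is `N`. -/
theorem SocleFinAway.of_torsionBy (hx : x ∈ 𝔞) (hN : ∀ z : N, ∃ k : ℕ, ∀ r ∈ 𝔞 ^ k, r • z = 0)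
    (hF : FinAway (cohtLT R (n + 1)) N)
    (h : SocleFinAway (cohtLT R n) 𝔞 (Submodule.torsionBy R N x)) :
    SocleFinAway (cohtLT R n) 𝔞 N := by
  obtain ⟨G, hG, hGW⟩ := exists_fg_support_quotient_subset hF
  have : Module.Finite R G := ⟨(Submodule.fg_top G).2 hG⟩
  let P : Submodule R N := G.comap (LinearMap.lsmul R N x)
  have hP : SocleFinAway (cohtLT R n) 𝔞 P := by
    have hle : Submodule.torsionBy R N x ≤ P := fun z hz => by
      rw [Submodule.mem_torsionBy_iff] at hz
      simp [P, hz]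
    refine .of_exact (Submodule.inclusion hle)
      (LinearMap.restrict (LinearMap.lsmul R N x) (p := P) (q := G) fun z hz => hz)
      (fun z => ⟨fun hz => ⟨⟨z, congrArg Subtype.val hz⟩, rfl⟩, ?_⟩) h .of_finite
    rintro ⟨w, rfl⟩
    exact Subtype.ext w.2
  refine .of_exact G.subtype G.mkQ (LinearMap.exact_subtype_mkQ G) .of_finite
    (of_torsionBy_of_support_subset hx (torsion_quotient hN G) hGW
      (.of_surjective (LinearMap.restrict G.mkQ fun z hz => ?_) (fun z => ?_) hP))
  · exact (Submodule.Quotient.mk_eq_zero _).2 hz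
  · obtain ⟨z, hz⟩ := z
    obtain ⟨z, rfl⟩ := Submodule.Quotient.mk_surjective _ z
    exact ⟨⟨z, (Submodule.Quotient.mk_eq_zero G).1 hz⟩, rfl⟩

theorem exists_finite_primes_of_support_subset
    (hN : ∀ z : N, ∃ k : ℕ, ∀ r ∈ 𝔞 ^ k, r • z = 0)
    (hW : Module.support R N ⊆ cohtLT R (n + 1)) (h : SocleFinAway (cohtLT R n) 𝔞 N) :
    ∃ Q : Set (Ideal R), Q.Finite ∧ (∀ q ∈ Q, q.IsPrime ∧ ¬ 𝔞 ≤ q) ∧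
      ∀ x ∈ 𝔞, (∀ q ∈ Q, x ∉ q) →
        FinAway (cohtLT R n) (N ⧸ LinearMap.range (LinearMap.lsmul R N x)) := by
  obtain ⟨G₀, hG₀, H₀⟩ := h ⊥
  have H : ∀ p ∉ cohtLT R n, ∀ z : N, (∀ r ∈ 𝔞, r • z = 0) → ∃ s ∉ p.asIdeal, s • z ∈ G₀ :=
    fun p hp z hz => by simpa using H₀ p hp z (by simpa using hz)
  have hfin := finite_support_diff hN hW hG₀ H
  have key : ∀ p ∈ Module.support R N \ cohtLT R n, ∃ Q : Set (Ideal R), Q.Finite ∧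
      (∀ q ∈ Q, q.IsPrime ∧ ¬ 𝔞 ≤ q) ∧ ∀ x ∈ 𝔞, (∀ q ∈ Q, x ∉ q) → ∃ k : ℕ, ∀ y ∈ 𝔞 ^ k, ∀ z : N,
        ∃ s ∉ p.asIdeal, ∃ w : N, s • y • z = x • w := by
    intro p hp
    have := isArtinian_localizedModule hN hW hG₀ H hp
    have : IsNoetherianRing (Localization.AtPrime p.asIdeal) :=
      IsLocalization.isNoetherianRing p.asIdeal.primeCompl _ inferInstance
    obtain ⟨Q, hQ, hQp, HQ⟩ := exists_finite_primes_of_isArtinian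
      (A := LocalizedModule p.asIdeal.primeCompl N)
      (𝔞.map (algebraMap R (Localization.AtPrime p.asIdeal)))
    refine ⟨Ideal.comap (algebraMap R (Localization.AtPrime p.asIdeal)) '' Q, hQ.image _, ?_,
    fun x hx hxQ => ?_⟩
    · rintro _ ⟨q, hq, rfl⟩
      have := (hQp q hq).1
      exact ⟨inferInstance, fun h => (hQp q hq).2 (Ideal.map_le_iff_le_comap.2 h)⟩
    · obtain ⟨k, hk⟩ := HQ _
        (Ideal.mem_map_of_mem (algebraMap R (Localization.AtPrime p.asIdeal)) hx)
        fun q hq h => hxQ _ ⟨q, hq, rfl⟩ h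
      refine ⟨k, fun y hy z => ?_⟩
      obtain ⟨w, hw⟩ := hk _
        (Ideal.map_pow (algebraMap R (Localization.AtPrime p.asIdeal)) 𝔞 k ▸
          Ideal.mem_map_of_mem _ hy)
        (LocalizedModule.mk z 1)
      induction w using LocalizedModule.induction_on with | h w t =>
      rw [algebraMap_smul, algebraMap_smul, LocalizedModule.smul'_mk, LocalizedModule.smul'_mk,
        LocalizedModule.mk_eq] at hw
      obtain ⟨u, hu⟩ := hw
      refine ⟨u * t, (u * t).2, (u : R) • w, ?_⟩
      rw [one_smul] at hu
      simp only [Submonoid.smul_def] at hu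
      rw [mul_smul, hu, smul_comm]
  choose! Q hQf hQp hQ using key
  refine ⟨⋃ p ∈ Module.support R N \ cohtLT R n, Q p, hfin.biUnion hQf, ?_, fun x hx hxQ => ?_⟩
  · intro q hq
    obtain ⟨p, hp, hq⟩ := Set.mem_iUnion₂.1 hq
    exact hQp p hp q hq
  have := fun p hp => hQ p hp x hx fun q hq => hxQ q (Set.mem_biUnion hp hq)
  choose! k hk using this
  obtain ⟨G, hG, HG⟩ := h.exists_fg_pow (hfin.toFinset.sup k)
    (LinearMap.range (LinearMap.lsmul R N x))
  refine ⟨G.map (Submodule.mkQ _), hG.map _, fun p hp z => ?_⟩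
  obtain ⟨z, rfl⟩ := Submodule.Quotient.mk_surjective _ z
  obtain ⟨s, hs, hsz⟩ := HG p hp z fun r hr => by
    by_cases hpN : p ∈ Module.support R N
    · obtain ⟨s, hs, w, e⟩ := hk p ⟨hpN, hp⟩ r (Ideal.pow_le_pow_right
        (Finset.le_sup (f := k) (hfin.mem_toFinset.2 ⟨hpN, hp⟩)) hr) z
      exact ⟨s, hs, w, e.symm⟩
    · obtain ⟨s, hs, e⟩ := Module.notMem_support_iff'.1 hpN (r • z)
      exact ⟨s, hs, e ▸ Submodule.zero_mem _⟩
  obtain ⟨g, hg, y, hy, e⟩ := Submodule.mem_sup.1 hsz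
  refine ⟨s, hs, g, hg, ?_⟩
  rw [Submodule.mkQ_apply, ← Submodule.Quotient.mk_smul, Submodule.Quotient.eq, ← e]
  simpa using hy

/-- A generic `x ∈ 𝔞` has `FinAway` cokernel on a `SocleFinAway` module. -/
theorem SocleFinAway.exists_finite_primes (h : SocleFinAway (cohtLT R n) 𝔞 N)
    (hN : ∀ z : N, ∃ k : ℕ, ∀ r ∈ 𝔞 ^ k, r • z = 0) (hF : FinAway (cohtLT R (n + 1)) N) :
    ∃ Q : Set (Ideal R), Q.Finite ∧ (∀ q ∈ Q, q.IsPrime ∧ ¬ 𝔞 ≤ q) ∧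
      ∀ x ∈ 𝔞, (∀ q ∈ Q, x ∉ q) →
        FinAway (cohtLT R n) (N ⧸ LinearMap.range (LinearMap.lsmul R N x)) := by
  obtain ⟨G, hG, hGW⟩ := exists_fg_support_quotient_subset hF
  have : Module.Finite R G := ⟨(Submodule.fg_top G).2 hG⟩
  obtain ⟨Q, hQ, hQp, HQ⟩ := exists_finite_primes_of_support_subset (torsion_quotient hN G) hGW
    (.of_surjective G.mkQ G.mkQ_surjective h)
  refine ⟨Q, hQ, hQp, fun x hx hxQ => ?_⟩
  let Y := LinearMap.range (LinearMap.lsmul R N x)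
  refine .of_exact (Y.mkQ ∘ₗ G.subtype)
    (Y.mapQ (LinearMap.range (LinearMap.lsmul R (N ⧸ G) x)) G.mkQ ?_) (fun z => ⟨?_, ?_⟩)
    .of_finite (HQ x hx hxQ)
  · rintro _ ⟨z, rfl⟩
    exact ⟨G.mkQ z, by simp⟩
  · obtain ⟨z, rfl⟩ := Submodule.Quotient.mk_surjective _ z
    intro hz
    obtain ⟨w, hw⟩ := (Submodule.Quotient.mk_eq_zero _).1 hz
    obtain ⟨w, rfl⟩ := Submodule.Quotient.mk_surjective _ w
    rw [LinearMap.lsmul_apply, ← Submodule.Quotient.mk_smul, Submodule.mkQ_apply,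
      Submodule.Quotient.eq] at hw
    refine ⟨-⟨_, hw⟩, ?_⟩
    refine (Submodule.Quotient.eq _).2 ?_
    exact ⟨-w, by simp⟩
  · rintro ⟨g, rfl⟩
    simp [(Submodule.Quotient.mk_eq_zero G).2 g.2]

end SocleCriterion

section

open Limits Pretriangulated

/-- `K` is a fiber of the multiplication by `x` on `X`, as seen by the long exact sequences of
morphisms into shifts. -/
def IsFiberSMul {R : Type*} [CommRing R] {𝒟 : Type*} [Category 𝒟] [Preadditive 𝒟]
    [HasShift 𝒟 ℤ] [Linear R 𝒟] (x : R) (X K : 𝒟) : Prop :=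
  ∃ (φ : ∀ (A : 𝒟) (i : ℤ), (A ⟶ K⟦i⟧) →ₗ[R] (A ⟶ X⟦i⟧))
      (δ : ∀ (A : 𝒟) (i : ℤ), (A ⟶ X⟦i - 1⟧) →ₗ[R] (A ⟶ K⟦i⟧)), ∀ (A : 𝒟) (i : ℤ),
    Function.Exact (LinearMap.lsmul R (A ⟶ X⟦i - 1⟧) x) (δ A i) ∧
    Function.Exact (δ A i) (φ A i) ∧
    Function.Exact (φ A i) (LinearMap.lsmul R (A ⟶ X⟦i⟧) x)

section HyperExt

variable {R : Type*} [CommRing R] {𝒟 : Type*} [Category 𝒟] [Preadditive 𝒟] [HasZeroObject 𝒟]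
  [HasShift 𝒟 ℤ] [∀ n : ℤ, (shiftFunctor 𝒟 n).Additive] [Pretriangulated 𝒟] [Linear R 𝒟]
  [∀ n : ℤ, (shiftFunctor 𝒟 n).Linear R]

theorem exists_isFiberSMul (x : R) (X : 𝒟) : ∃ K : 𝒟, IsFiberSMul x X K := by
  obtain ⟨K, f, g, hT⟩ := distinguished_cocone_triangle₁ (x • 𝟙 X)
  let T := Triangle.mk f (x • 𝟙 X) g
  have hx : ∀ (A : 𝒟) (i : ℤ), (Linear.rightComp R A ((x • 𝟙 X)⟦i⟧')) =
      LinearMap.lsmul R (A ⟶ X⟦i⟧) x := by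
    intro A i
    ext z
    simp [Functor.map_smul]
  have hδ (A : 𝒟) (i : ℤ) (z : A ⟶ X⟦i - 1⟧) :
      (preadditiveCoyoneda.obj (Opposite.op A)).homologySequenceδ T (i - 1) i (by lia) z =
        z ≫ g⟦i - 1⟧' ≫ (shiftFunctorAdd' 𝒟 1 (i - 1) i (by lia)).inv.app K :=
    preadditiveCoyoneda_homologySequenceδ_apply T (i - 1) i (by lia) (A := Opposite.op A) z
  refine ⟨K, fun A i => Linear.rightComp R A (f⟦i⟧'), fun A i => Linear.rightComp R A
    (g⟦i - 1⟧' ≫ (shiftFunctorAdd' 𝒟 1 (i - 1) i (by lia)).inv.app _), fun A i => ⟨?_, ?_, ?_⟩⟩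
  · rw [← hx]
    have h := (preadditiveCoyoneda.obj (Opposite.op A)).homologySequence_exact₃ T hT (i - 1) i
      (by lia)
    rw [ShortComplex.ab_exact_iff_function_exact] at h
    exact fun z => Iff.trans (Eq.congr_left (hδ A i z).symm) (h z)
  · have h := (preadditiveCoyoneda.obj (Opposite.op A)).homologySequence_exact₁ T hT (i - 1) i
      (by lia)
    rw [ShortComplex.ab_exact_iff_function_exact] at h
    exact fun z => Iff.trans (h z) (exists_congr fun w => Eq.congr_left (hδ A i w))
  · rw [← hx]
    have := ((preadditiveCoyoneda.obj (Opposite.op A)).homologySequence_exact₂ T hT i)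
    rw [ShortComplex.ab_exact_iff_function_exact] at this
    exact this

variable {C : Type*} [Category C] [HasZeroMorphisms C] (S : C ⥤ 𝒟)

/-- The contravariant long exact sequence of a short exact sequence. -/
theorem exists_contravariant_exact {T : ShortComplex C} {h : S.obj T.X₃ ⟶ (S.obj T.X₁)⟦(1 : ℤ)⟧}
    (hT : Triangle.mk (S.map T.f) (S.map T.g) h ∈ distTriang 𝒟) (X : 𝒟) (i : ℤ) :
    ∃ δ : (S.obj T.X₁ ⟶ X⟦i⟧) →ₗ[R] (S.obj T.X₃ ⟶ X⟦i + 1⟧),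
      Function.Exact δ (Linear.leftComp R (X⟦i + 1⟧) (S.map T.g)) := by
  refine ⟨{ toFun := fun z => h ≫ z⟦(1 : ℤ)⟧' ≫ (shiftFunctorAdd' 𝒟 i 1 _ rfl).inv.app X
            map_add' := by simp
            map_smul' := by simp [Functor.map_smul] }, fun z => ?_⟩
  constructor
  · intro hz
    obtain ⟨w, rfl⟩ : ∃ w : (S.obj T.X₁)⟦(1 : ℤ)⟧ ⟶ X⟦i + 1⟧, z = h ≫ w :=
      Triangle.yoneda_exact₃ _ hT z hz
    obtain ⟨w', hw'⟩ := (shiftFunctor 𝒟 (1 : ℤ)).map_surjective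
      (w ≫ (shiftFunctorAdd' 𝒟 i 1 _ rfl).hom.app X)
    exact ⟨w', by simp [hw']⟩
  · rintro ⟨w, rfl⟩
    have : S.map T.g ≫ h = 0 := comp_distTriang_mor_zero₂₃ _ hT
    simp [reassoc_of% this]

omit [∀ n : ℤ, (shiftFunctor 𝒟 n).Linear R] in
theorem exact_leftComp {T : ShortComplex C} {h : S.obj T.X₃ ⟶ (S.obj T.X₁)⟦(1 : ℤ)⟧}
    (hT : Triangle.mk (S.map T.f) (S.map T.g) h ∈ distTriang 𝒟) (Y : 𝒟) :
    Function.Exact (Linear.leftComp R Y (S.map T.g)) (Linear.leftComp R Y (S.map T.f)) := by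
  intro z
  constructor
  · intro hz
    obtain ⟨w, rfl⟩ := Triangle.yoneda_exact₂ _ hT z hz
    exact ⟨w, rfl⟩
  · rintro ⟨w, rfl⟩
    have : S.map T.f ≫ S.map T.g = 0 := comp_distTriang_mor_zero₁₂ _ hT
    simp [reassoc_of% this]

end HyperExt

theorem Module.Finite.of_function_exact {R A B C : Type*} [CommRing R] [IsNoetherianRing R]
    [AddCommGroup A] [Module R A] [AddCommGroup B] [Module R B] [AddCommGroup C] [Module R C]
    {f : A →ₗ[R] B} {g : B →ₗ[R] C} (hfg : Function.Exact f g) [Module.Finite R A]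
    [Module.Finite R C] : Module.Finite R B :=
  ⟨Submodule.fg_of_fg_map_of_fg_inf_ker g (IsNoetherian.noetherian _) <| by
    rw [top_inf_eq, LinearMap.exact_iff.1 hfg, LinearMap.range_eq_map]
    exact Module.Finite.fg_top.map f⟩

theorem smul_quotient_eq_zero {R : Type*} [CommRing R] {I : Ideal R} {r : R} (hr : r ∈ I)
    (z : R ⧸ I) : r • z = 0 := by
  obtain ⟨z, rfl⟩ := Submodule.Quotient.mk_surjective _ z
  exact (Submodule.Quotient.mk_eq_zero _).2 (I.mul_mem_right z hr)

theorem Int.induction_of_neg {P : ℤ → Prop} (neg : ∀ i < 0, P i) (succ : ∀ i, P i → P (i + 1))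
    (i : ℤ) : P i := by
  rcases lt_or_ge i 0 with h | h
  · exact neg i h
  · exact Int.leInduction (m := -1) (neg _ (by lia)) (fun i _ => succ i) i (by lia)

theorem shortExact_moduleCat {R : Type*} [CommRing R] {A B C : Type u} [AddCommGroup A]
    [Module R A] [AddCommGroup B]
    [Module R B] [AddCommGroup C] [Module R C] {f : A →ₗ[R] B} {g : B →ₗ[R] C}
    (hfg : Function.Exact f g) (hf : Function.Injective f) (hg : Function.Surjective g) :
    (ShortComplex.mk (ModuleCat.ofHom f) (ModuleCat.ofHom g)
      (by ext z; exact hfg.apply_apply_eq_zero z)).ShortExact where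
  exact := (ShortComplex.ShortExact.moduleCat_exact_iff_function_exact _).2 hfg
  mono_f := (ModuleCat.mono_iff_injective _).2 hf
  epi_g := (ModuleCat.epi_iff_surjective _).2 hg

section Linear

variable {R : Type u} [CommRing R] {𝒟 : Type*} [Category 𝒟] [Preadditive 𝒟] [Linear R 𝒟]
  {S : ModuleCat.{u} R ⥤ 𝒟} [S.Additive] [S.Linear R]

theorem smul_hom_eq_zero {L : Type u} [AddCommGroup L] [Module R L] {r : R}
    (hr : ∀ z : L, r • z = 0) {Y : 𝒟} (f : S.obj (ModuleCat.of R L) ⟶ Y) : r • f = 0 := by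
  have : r • 𝟙 (ModuleCat.of R L) = 0 := by
    ext z
    exact hr z
  rw [← Category.id_comp f, ← Linear.smul_comp, ← S.map_id, ← S.map_smul, this, S.map_zero,
    zero_comp]

omit [Linear R 𝒟] [S.Linear R] in
theorem eq_zero_of_forall_map_single_comp_eq_zero {n : ℕ} {Y : 𝒟}
    (f : S.obj (ModuleCat.of R (Fin n → R)) ⟶ Y)
    (hf : ∀ g : R →ₗ[R] (Fin n → R), S.map (ModuleCat.ofHom g) ≫ f = 0) : f = 0 := by
  have : 𝟙 (ModuleCat.of R (Fin n → R)) = ∑ i, ModuleCat.ofHom (LinearMap.proj i) ≫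
      ModuleCat.ofHom (LinearMap.single R (fun _ : Fin n => R) i) := by
    refine ModuleCat.hom_ext (LinearMap.ext fun z => ?_)
    simp [ModuleCat.hom_sum, LinearMap.sum_apply, Finset.univ_sum_single]
  rw [← Category.id_comp f, ← S.map_id, this, S.map_sum, Preadditive.sum_comp]
  exact Finset.sum_eq_zero fun i _ => by rw [S.map_comp, Category.assoc, hf, comp_zero]

end Linear

/-- The maps from `S.obj L` to the negative shifts of `X` all vanish. -/
def IsCoconnective {C : Type*} [Category C] {𝒟 : Type*} [Category 𝒟]
    [Preadditive 𝒟] [HasShift 𝒟 ℤ] (S : C ⥤ 𝒟) (X : 𝒟) : Prop :=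
  ∀ (L : C), ∀ i < (0 : ℤ), Subsingleton (S.obj L ⟶ X⟦i⟧)

section HyperExtFinite

variable {R : Type u} [CommRing R] [IsNoetherianRing R] {𝒟 : Type*} [Category 𝒟] [Preadditive 𝒟]
  [HasZeroObject 𝒟] [HasShift 𝒟 ℤ] [∀ n : ℤ, (shiftFunctor 𝒟 n).Additive] [Pretriangulated 𝒟]
  [Linear R 𝒟] [∀ n : ℤ, (shiftFunctor 𝒟 n).Linear R]

/-- A functor to a pretriangulated category which sends short exact sequences to distinguished
triangles. -/
def IsTriangleValued {C : Type*} [Category C] [HasZeroMorphisms C] (S : C ⥤ 𝒟) : Prop :=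
  ∀ T : ShortComplex C, T.ShortExact → ∃ h : S.obj T.X₃ ⟶ (S.obj T.X₁)⟦(1 : ℤ)⟧,
    Triangle.mk (S.map T.f) (S.map T.g) h ∈ distTriang 𝒟

variable {S : ModuleCat.{u} R ⥤ 𝒟} (hS : IsTriangleValued S) {X : 𝒟}
  {𝔞 : Ideal R}

variable [S.Additive]

include hS in
/-- Dimension shifting along a prime filtration. -/
theorem finite_hom_succ {i : ℤ}
    (h : ∀ (L : Type u) [AddCommGroup L] [Module R L] [Module.Finite R L],
      (∃ k : ℕ, ∀ r ∈ 𝔞 ^ k, ∀ z : L, r • z = 0) →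
        Module.Finite R (S.obj (ModuleCat.of R L) ⟶ X⟦i⟧))
    (h𝔞 : Module.Finite R (S.obj (ModuleCat.of R (R ⧸ 𝔞)) ⟶ X⟦i + 1⟧))
    (L : Type u) [AddCommGroup L] [Module R L] [hL : Module.Finite R L] :
    (∃ k : ℕ, ∀ r ∈ 𝔞 ^ k, ∀ z : L, r • z = 0) →
      Module.Finite R (S.obj (ModuleCat.of R L) ⟶ X⟦i + 1⟧) := by
  induction hL using IsNoetherianRing.induction_on_isQuotientEquivQuotientPrime R with
  | subsingleton N =>
    have := (S.map_isZero (ModuleCat.isZero_of_subsingleton (ModuleCat.of R N))).eq_of_src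
      (Y := X⟦i + 1⟧)
    have : Subsingleton (S.obj (ModuleCat.of R N) ⟶ X⟦i + 1⟧) := ⟨this⟩
    exact fun _ => inferInstance
  | quotient N p e =>
    rintro ⟨k, hk⟩
    have hp : 𝔞 ≤ p.1 := fun r hr => p.2.mem_of_pow_mem k <| by
      have := hk _ (Ideal.pow_mem_pow hr k) (e.symm 1)
      rw [← map_smul, LinearEquiv.map_eq_zero_iff, Algebra.smul_def, mul_one] at this
      exact Ideal.Quotient.eq_zero_iff_mem.1 this
    let g : (R ⧸ 𝔞) →ₗ[R] N := e.symm.toLinearMap ∘ₗ Submodule.factor hp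
    have hg : Function.Surjective g := e.symm.surjective.comp (Submodule.factor_surjective hp)
    have := h (LinearMap.ker g) ⟨1, fun r hr z => Subtype.ext <| by
      obtain ⟨z, hz⟩ := z
      obtain ⟨z, rfl⟩ := Submodule.Quotient.mk_surjective _ z
      rw [pow_one] at hr
      exact (Submodule.Quotient.mk_eq_zero _).2 (𝔞.mul_mem_right z hr)⟩
    obtain ⟨_, hT⟩ := hS _ (shortExact_moduleCat g.exact_subtype_ker_map
      (Submodule.subtype_injective _) hg)
    obtain ⟨δ, hδ⟩ := exists_contravariant_exact (R := R) S hT X i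
    exact .of_function_exact hδ
  | exact N₁ N₂ N₃ f g hf hg hfg h₁ h₃ =>
    rintro ⟨k, hk⟩
    have := h₁ ⟨k, fun r hr z => hf (by simp [hk r hr])⟩
    have := h₃ ⟨k, fun r hr z => by
      obtain ⟨z, rfl⟩ := hg z
      rw [← map_smul, hk r hr, map_zero]⟩
    obtain ⟨_, hT⟩ := hS _ (shortExact_moduleCat hfg hf hg)
    exact .of_function_exact (exact_leftComp (R := R) S hT (X⟦i + 1⟧))

include hS in
theorem finite_hom_of_pow_smul (hX : IsCoconnective S X) {j : ℤ}
    (h : ∀ i ≤ j, Module.Finite R (S.obj (ModuleCat.of R (R ⧸ 𝔞)) ⟶ X⟦i⟧)) {i : ℤ} (hi : i ≤ j)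
    (L : Type u) [AddCommGroup L] [Module R L] [Module.Finite R L]
    (hL : ∃ k : ℕ, ∀ r ∈ 𝔞 ^ k, ∀ z : L, r • z = 0) :
    Module.Finite R (S.obj (ModuleCat.of R L) ⟶ X⟦i⟧) := by
  induction i using Int.induction_of_neg generalizing L with
  | neg i h0 =>
    have := hX (.of R L) i h0
    infer_instance
  | succ i ih => exact finite_hom_succ hS (fun L _ _ _ => ih (by lia) L) (h _ hi) L hL

include hS in
theorem finite_hom_of_finite (hX : IsCoconnective S X) {j : ℤ}
    (h : ∀ i ≤ j, Module.Finite R (S.obj (ModuleCat.of R R) ⟶ X⟦i⟧)) {i : ℤ} (hi : i ≤ j)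
    (L : Type u) [AddCommGroup L] [Module R L] [Module.Finite R L] :
    Module.Finite R (S.obj (ModuleCat.of R L) ⟶ X⟦i⟧) := by
  refine finite_hom_of_pow_smul (𝔞 := ⊥) hS hX (fun i hi => ?_) hi L
    ⟨1, fun r hr z => by simp_all⟩
  have := h i hi
  let e : S.obj (ModuleCat.of R (R ⧸ (⊥ : Ideal R))) ≅ S.obj (ModuleCat.of R R) :=
    S.mapIso (Submodule.quotEquivOfEqBot (⊥ : Ideal R) rfl).toModuleIso
  exact .of_surjective (Linear.leftComp R (X⟦i⟧) e.hom) fun z => ⟨e.inv ≫ z, by simp⟩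

variable [S.Linear R]

include hS in
theorem finite_hom_self_succ {i : ℤ} (k : ℕ)
    (hfin : ∀ (L : Type u) [AddCommGroup L] [Module R L] [Module.Finite R L],
      Module.Finite R (S.obj (ModuleCat.of R L) ⟶ X⟦i⟧))
    (hk : ∀ r ∈ 𝔞 ^ k, ∀ z : S.obj (ModuleCat.of R R) ⟶ X⟦i + 1⟧, r • z = 0)
    (h : Module.Finite R (S.obj (ModuleCat.of R (R ⧸ 𝔞 ^ k)) ⟶ X⟦i + 1⟧)) :
    Module.Finite R (S.obj (ModuleCat.of R R) ⟶ X⟦i + 1⟧) := by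
  obtain ⟨_, hT⟩ := hS _ (shortExact_moduleCat (LinearMap.exact_subtype_mkQ (𝔞 ^ k))
    (Submodule.subtype_injective _) (Submodule.mkQ_surjective _))
  obtain ⟨n, π, hπ⟩ := Module.Finite.exists_fin' R (𝔞 ^ k : Ideal R)
  obtain ⟨_, hT'⟩ := hS _ (shortExact_moduleCat π.exact_subtype_ker_map
    (Submodule.subtype_injective _) hπ)
  obtain ⟨δ, hδ⟩ := exists_contravariant_exact (R := R) S hT' X i
  have hex := exact_leftComp (R := R) S hT (X⟦i + 1⟧)
  have := hfin (LinearMap.ker π)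
  refine ⟨Submodule.fg_of_fg_map_of_fg_inf_ker (Linear.leftComp R (X⟦i + 1⟧)
    (S.map (ModuleCat.ofHom (𝔞 ^ k : Ideal R).subtype))) ?_ ?_⟩
  · refine Submodule.FG.of_le (T := LinearMap.range δ) ?_ ?_
    · rw [LinearMap.range_eq_map]
      exact Module.Finite.fg_top.map δ
    · rintro _ ⟨z, -, rfl⟩
      refine (hδ _).1 (eq_zero_of_forall_map_single_comp_eq_zero (R := R) _ fun g => ?_)
      have e : ModuleCat.ofHom g ≫ ModuleCat.ofHom π ≫
          ModuleCat.ofHom (𝔞 ^ k : Ideal R).subtype =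
          ((π (g 1) : (𝔞 ^ k : Ideal R)) : R) • 𝟙 (ModuleCat.of R R) := by
        refine ModuleCat.hom_ext (LinearMap.ext_ring ?_)
        simp
      simp only [Linear.leftComp_apply]
      rw [← S.map_comp_assoc, ← S.map_comp_assoc, Category.assoc, e, S.map_smul, S.map_id,
        Linear.smul_comp,
        Category.id_comp]
      exact hk _ (π (g 1)).2 z
  · rw [top_inf_eq, LinearMap.exact_iff.1 hex, LinearMap.range_eq_map]
    exact Module.Finite.fg_top.map _

include hS in
theorem finite_hom_of_forall_smul_eq_zero (hX : IsCoconnective S X) {j : ℤ} (k : ℕ)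
    (hk : ∀ i ≤ j, ∀ r ∈ 𝔞 ^ k, ∀ z : S.obj (ModuleCat.of R R) ⟶ X⟦i⟧, r • z = 0)
    (h : ∀ i ≤ j, Module.Finite R (S.obj (ModuleCat.of R (R ⧸ 𝔞)) ⟶ X⟦i⟧)) :
    ∀ i ≤ j, Module.Finite R (S.obj (ModuleCat.of R R) ⟶ X⟦i⟧) := by
  suffices ∀ l ≤ j, ∀ i ≤ l, Module.Finite R (S.obj (ModuleCat.of R R) ⟶ X⟦i⟧) from this j le_rfl
  intro l hl
  induction l using Int.induction_of_neg with
  | neg l h0 =>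
    intro i hi
    have := hX (.of R R) i (hi.trans_lt h0)
    infer_instance
  | succ l ih =>
    intro i hi
    rcases eq_or_ne i (l + 1) with rfl | hne
    · exact finite_hom_self_succ hS k (fun L _ _ _ =>
        finite_hom_of_finite hS hX (ih (by lia)) le_rfl L)
        (hk _ hl) (finite_hom_of_pow_smul hS hX h hl _
          ⟨k, fun r hr z => smul_quotient_eq_zero hr z⟩)
    · exact ih (by lia) i (by lia)

end HyperExtFinite

theorem torsion_of_exact {R A B C : Type*} [CommRing R] [IsNoetherianRing R]
    [AddCommGroup A] [Module R A] [AddCommGroup B] [Module R B] [AddCommGroup C] [Module R C]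
    {𝔞 : Ideal R} {f : A →ₗ[R] B} {g : B →ₗ[R] C} (hfg : Function.Exact f g)
    (hA : ∀ z : A, ∃ k : ℕ, ∀ r ∈ 𝔞 ^ k, r • z = 0)
    (hC : ∀ z : C, ∃ k : ℕ, ∀ r ∈ 𝔞 ^ k, r • z = 0) (z : B) :
    ∃ k : ℕ, ∀ r ∈ 𝔞 ^ k, r • z = 0 := by
  obtain ⟨k, hk⟩ := hC (g z)
  have hk' : ∀ r ∈ 𝔞 ^ k, ∃ w, f w = r • z := fun r hr => (hfg _).1 (by rw [map_smul, hk r hr])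
  suffices ∀ I : Ideal R, I.FG → I ≤ 𝔞 ^ k → ∃ m : ℕ, ∀ s ∈ 𝔞 ^ m, ∀ r ∈ I, (s * r) • z = 0 by
    obtain ⟨m, hm⟩ := this (𝔞 ^ k) (IsNoetherian.noetherian _) le_rfl
    refine ⟨m + k, fun r hr => ?_⟩
    rw [pow_add] at hr
    exact Submodule.mul_induction_on hr hm fun a b ha hb => by rw [add_smul, ha, hb, add_zero]
  intro I hI
  induction I, hI using Submodule.fg_induction with
  | singleton x =>
    intro hx
    obtain ⟨w, hw⟩ := hk' x (hx (Submodule.mem_span_singleton_self x))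
    obtain ⟨m, hm⟩ := hA w
    refine ⟨m, fun s hs r hr => ?_⟩
    obtain ⟨c, rfl⟩ := Submodule.mem_span_singleton.1 hr
    rw [smul_eq_mul, ← mul_assoc, mul_smul, ← hw, ← map_smul, hm _ (Ideal.mul_mem_right _ _ hs),
      map_zero]
  | sup I J _ _ hI hJ =>
    intro hIJ
    obtain ⟨m, hm⟩ := hI (le_sup_left.trans hIJ)
    obtain ⟨m', hm'⟩ := hJ (le_sup_right.trans hIJ)
    refine ⟨max m m', fun s hs r hr => ?_⟩
    obtain ⟨a, ha, b, hb, rfl⟩ := Submodule.mem_sup.1 hr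
    rw [mul_add, add_smul, hm s (Ideal.pow_le_pow_right (le_max_left _ _) hs) a ha,
      hm' s (Ideal.pow_le_pow_right (le_max_right _ _) hs) b hb, add_zero]

theorem exists_mem_forall_notMem {R : Type*} [CommRing R] {𝔞 : Ideal R} {Q : Set (Ideal R)}
    (hQ : Q.Finite) (h : ∀ q ∈ Q, q.IsPrime ∧ ¬ 𝔞 ≤ q) : ∃ x ∈ 𝔞, ∀ q ∈ Q, x ∉ q := by
  by_contra! H
  have := (Ideal.subset_union_prime (s := hQ.toFinset) (f := id) (I := 𝔞) ⊥ ⊥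
    fun q hq _ _ => (h q (by simpa using hq)).1).1 fun x hx => by
      obtain ⟨q, hq, hxq⟩ := H x hx
      exact Set.mem_biUnion (by simpa using hq) hxq
  obtain ⟨q, hq, hle⟩ := this
  exact (h q (by simpa using hq)).2 hle

section Generic

variable {R : Type u} [CommRing R] {𝒟 : Type*} [Category 𝒟] [Preadditive 𝒟]
  [HasShift 𝒟 ℤ] [Linear R 𝒟] (S : ModuleCat.{u} R ⥤ 𝒟)

/-- The ideal of elements annihilating all the cohomology of `X`. -/
def cohomologyAnnihilator (X : 𝒟) : Ideal R :=
  ⨅ i : ℤ, Module.annihilator R (S.obj (ModuleCat.of R R) ⟶ X⟦i⟧)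

/-- The cohomology of `X` is `𝔞`-torsion, is finitely generated in degree `i ≤ j` away from the
primes of coheight at most `d - i`, and the derived morphisms from `R ⧸ 𝔞` into `X` are finitely
generated up to degree `j`. -/
structure SocleHyp (𝔞 : Ideal R) (d : ℕ) (j : ℤ) (X : 𝒟) : Prop where
  coconnective : IsCoconnective S X
  torsion : ∀ (i : ℤ) (z : S.obj (ModuleCat.of R R) ⟶ X⟦i⟧), ∃ k : ℕ, ∀ r ∈ 𝔞 ^ k, r • z = 0
  finAway : ∀ i ≤ j, FinAway (cohtLT R (d + 1 - i).toNat) (S.obj (ModuleCat.of R R) ⟶ X⟦i⟧)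
  finite : ∀ i ≤ j, Module.Finite R (S.obj (ModuleCat.of R (R ⧸ 𝔞)) ⟶ X⟦i⟧)

variable {S} {𝔞 : Ideal R} {d : ℕ} {j : ℤ} {X K : 𝒟} {x : R}

theorem mem_cohomologyAnnihilator {r : R} : r ∈ cohomologyAnnihilator S X ↔
    ∀ (i : ℤ) (z : S.obj (ModuleCat.of R R) ⟶ X⟦i⟧), r • z = 0 := by
  simp [cohomologyAnnihilator, Module.mem_annihilator]

theorem SocleHyp.mono (h : SocleHyp S 𝔞 d j X) {j' : ℤ} (hj : j' ≤ j) : SocleHyp S 𝔞 d j' X where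
  coconnective := h.coconnective
  torsion := h.torsion
  finAway i hi := h.finAway i (hi.trans hj)
  finite i hi := h.finite i (hi.trans hj)

theorem IsFiberSMul.isCoconnective (hK : IsFiberSMul x X K) (hX : IsCoconnective S X) :
    IsCoconnective S K := by
  obtain ⟨φ, δ, h⟩ := hK
  intro L i hi
  obtain ⟨-, h, -⟩ := h (S.obj L) i
  have := hX L i hi
  have := hX L (i - 1) (by lia)
  refine subsingleton_of_forall_eq 0 fun z => ?_
  obtain ⟨w, rfl⟩ := (h z).1 (Subsingleton.elim _ _)
  rw [Subsingleton.elim w 0, map_zero]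

theorem IsFiberSMul.sq_smul_eq_zero (hK : IsFiberSMul x X K) {r : R}
    (hr : r = x ∨ r ∈ cohomologyAnnihilator S X) (i : ℤ) (z : S.obj (ModuleCat.of R R) ⟶ K⟦i⟧) :
    r ^ 2 • z = 0 := by
  obtain ⟨φ, δ, h⟩ := hK
  obtain ⟨h₁, h₂, h₃⟩ := h (S.obj (ModuleCat.of R R)) i
  obtain ⟨w, hw⟩ := (h₂ (r • z)).1 <| by
    rcases hr with rfl | hr
    · exact (map_smul _ _ _).trans ((h₃ _).2 ⟨z, rfl⟩)
    · rw [map_smul, mem_cohomologyAnnihilator.1 hr]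
  rw [pow_two, mul_smul, ← hw, ← map_smul]
  rcases hr with rfl | hr
  · exact (h₁ _).2 ⟨w, rfl⟩
  · rw [mem_cohomologyAnnihilator.1 hr, map_zero]

theorem IsFiberSMul.mem_radical (hK : IsFiberSMul x X K) :
    x ∈ (cohomologyAnnihilator S K).radical :=
  ⟨2, mem_cohomologyAnnihilator.2 (hK.sq_smul_eq_zero (.inl rfl))⟩

theorem IsFiberSMul.radical_le (hK : IsFiberSMul x X K) :
    (cohomologyAnnihilator S X).radical ≤ (cohomologyAnnihilator S K).radical := by
  rw [Ideal.radical_le_radical_iff]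
  exact fun r hr => ⟨2, mem_cohomologyAnnihilator.2 (hK.sq_smul_eq_zero (.inr hr))⟩

theorem IsFiberSMul.radical_lt (hK : IsFiberSMul x X K)
    (hx : x ∉ (cohomologyAnnihilator S X).radical) :
    (cohomologyAnnihilator S X).radical < (cohomologyAnnihilator S K).radical :=
  SetLike.lt_iff_le_and_exists.2 ⟨hK.radical_le, x, hK.mem_radical, hx⟩

theorem IsFiberSMul.exact_liftQ (hK : IsFiberSMul x X K) (A : 𝒟) (i : ℤ) :
    ∃ (f : ((A ⟶ X⟦i - 1⟧) ⧸ LinearMap.range (LinearMap.lsmul R (A ⟶ X⟦i - 1⟧) x)) →ₗ[R]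
      (A ⟶ K⟦i⟧)) (g : (A ⟶ K⟦i⟧) →ₗ[R] (A ⟶ X⟦i⟧)), Function.Exact f g ∧
      LinearMap.range g = Submodule.torsionBy R (A ⟶ X⟦i⟧) x := by
  obtain ⟨φ, δ, h⟩ := hK
  obtain ⟨h₁, h₂, h₃⟩ := h A i
  refine ⟨Submodule.liftQ _ (δ A i) (LinearMap.exact_iff.1 h₁).ge, φ A i, ?_, ?_⟩
  · rw [LinearMap.exact_iff, Submodule.range_liftQ]
    exact LinearMap.exact_iff.1 h₂
  · exact (LinearMap.exact_iff.1 h₃).symm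

variable [IsNoetherianRing R]

theorem SocleHyp.of_isFiberSMul (h : SocleHyp S 𝔞 d j X) (hK : IsFiberSMul x X K)
    (hx : ∀ i < j, FinAway (cohtLT R (d - i).toNat) ((S.obj (ModuleCat.of R R) ⟶ X⟦i⟧) ⧸
      LinearMap.range (LinearMap.lsmul R (S.obj (ModuleCat.of R R) ⟶ X⟦i⟧) x))) :
    SocleHyp S 𝔞 d j K where
  coconnective := hK.isCoconnective h.coconnective
  torsion i := by
    obtain ⟨φ, δ, H⟩ := hK
    exact torsion_of_exact (H _ i).2.1 (h.torsion _) (h.torsion _)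
  finAway i hi := by
    obtain ⟨f, g, hfg, -⟩ := hK.exact_liftQ (S.obj (ModuleCat.of R R)) i
    have := hx (i - 1) (by lia)
    rw [show (d - (i - 1) : ℤ) = d + 1 - i by ring] at this
    exact .of_exact f g hfg this (h.finAway i hi)
  finite i hi := by
    obtain ⟨φ, δ, H⟩ := hK
    have := h.finite i hi
    have := h.finite (i - 1) (by lia)
    exact .of_function_exact (H _ i).2.1

variable [HasZeroObject 𝒟] [∀ n : ℤ, (shiftFunctor 𝒟 n).Additive]
  [Pretriangulated 𝒟] [∀ n : ℤ, (shiftFunctor 𝒟 n).Linear R]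

/-- A generic element of `𝔞` yields a fiber with a strictly larger cohomology annihilator. -/
theorem SocleHyp.exists_fiber (h : SocleHyp S 𝔞 d j X) {j' : ℤ} (hj : j' ≤ j) (hj' : j' ≤ d)
    (hsoc : ∀ i ≤ j', SocleFinAway (cohtLT R (d - i).toNat) 𝔞 (S.obj (ModuleCat.of R R) ⟶ X⟦i⟧))
    (ha : ¬ 𝔞 ≤ (cohomologyAnnihilator S X).radical) :
    ∃ x ∈ 𝔞, (∀ i ≤ j', FinAway (cohtLT R (d - i).toNat) ((S.obj (ModuleCat.of R R) ⟶ X⟦i⟧) ⧸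
      LinearMap.range (LinearMap.lsmul R (S.obj (ModuleCat.of R R) ⟶ X⟦i⟧) x))) ∧
      ∃ K : 𝒟, IsFiberSMul x X K ∧
        (cohomologyAnnihilator S X).radical < (cohomologyAnnihilator S K).radical := by
  have : ∀ i ≤ j', ∃ Q : Set (Ideal R), Q.Finite ∧ (∀ q ∈ Q, q.IsPrime ∧ ¬ 𝔞 ≤ q) ∧
      ∀ x ∈ 𝔞, (∀ q ∈ Q, x ∉ q) → FinAway (cohtLT R (d - i).toNat)
        ((S.obj (ModuleCat.of R R) ⟶ X⟦i⟧) ⧸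
          LinearMap.range (LinearMap.lsmul R (S.obj (ModuleCat.of R R) ⟶ X⟦i⟧) x)) := by
    intro i hi
    refine (hsoc i hi).exists_finite_primes (h.torsion i) ?_
    have := h.finAway i (hi.trans hj)
    rwa [show (d + 1 - i : ℤ).toNat = (d - i : ℤ).toNat + 1 by lia] at this
  choose! Q hQf hQ HQ using this
  rw [Ideal.radical_eq_sInf, le_sInf_iff] at ha
  push Not at ha
  obtain ⟨q, ⟨hq, hqp⟩, haq⟩ := ha
  obtain ⟨x, hx, hxQ⟩ := exists_mem_forall_notMem (𝔞 := 𝔞)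
    (Q := insert q (⋃ i ∈ Set.Icc 0 j', Q i))
    (.insert _ ((Set.finite_Icc 0 j').biUnion fun i hi => hQf i hi.2)) <| by
      rintro _ (rfl | hp)
      · exact ⟨hqp, haq⟩
      · obtain ⟨i, hi, hp⟩ := Set.mem_iUnion₂.1 hp
        exact hQ i hi.2 _ hp
  obtain ⟨K, hK⟩ := exists_isFiberSMul x X
  refine ⟨x, hx, fun i hi => ?_, K, hK, hK.radical_lt fun h => hxQ q (.inl rfl)
    (hqp.radical_le_iff.2 hq h)⟩
  rcases lt_or_ge i 0 with h0 | h0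
  · have := h.coconnective (.of R R) i h0
    exact .of_finite
  · exact HQ i hi x hx fun q hq => hxQ q (.inr (Set.mem_biUnion ⟨h0, hi⟩ hq))

variable (hS : IsTriangleValued S) [S.Additive] [S.Linear R]

include hS in
theorem finite_hom_of_le_radical (hX : IsCoconnective S X)
    (h : ∀ i ≤ j, Module.Finite R (S.obj (ModuleCat.of R (R ⧸ 𝔞)) ⟶ X⟦i⟧))
    (ha : 𝔞 ≤ (cohomologyAnnihilator S X).radical) :
    ∀ i ≤ j, Module.Finite R (S.obj (ModuleCat.of R R) ⟶ X⟦i⟧) := by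
  obtain ⟨k, hk⟩ := Ideal.exists_pow_le_of_le_radical_of_fg ha (IsNoetherian.noetherian 𝔞)
  exact finite_hom_of_forall_smul_eq_zero hS hX k
    (fun i _ r hr z => mem_cohomologyAnnihilator.1 (hk hr) i z) h

include hS in
theorem SocleHyp.socleFinAway (h : SocleHyp S 𝔞 d j X) (hj : j ≤ d) {i : ℤ} (hi : i ≤ j) :
    SocleFinAway (cohtLT R (d - i).toNat) 𝔞 (S.obj (ModuleCat.of R R) ⟶ X⟦i⟧) := by
  replace h := h.mono hi
  replace hj := hi.trans hj
  clear hi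
  suffices ∀ i' ≤ i, SocleFinAway (cohtLT R (d - i').toNat) 𝔞 (S.obj (ModuleCat.of R R) ⟶ X⟦i'⟧)
    from this i le_rfl
  induction i using Int.induction_of_neg generalizing X with
  | neg i h0 =>
    intro i' hi'
    have := h.coconnective (.of R R) i' (hi'.trans_lt h0)
    exact .of_finite
  | succ i ih =>
    intro i' hi'
    rcases Int.lt_or_eq_of_le hi' with hlt | rfl
    · exact ih (h.mono (by lia)) (by lia) i' (by lia)
    clear hi'
    induction hJ : (cohomologyAnnihilator S X).radical
      using WellFoundedGT.induction generalizing X with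
    | _ J ihJ =>
    by_cases ha : 𝔞 ≤ (cohomologyAnnihilator S X).radical
    · have := finite_hom_of_le_radical hS h.coconnective h.finite ha _ le_rfl
      exact .of_finite
    obtain ⟨x, hx, hxf, K, hK, hlt⟩ := h.exists_fiber (j' := i) (by lia) (by lia)
      (fun i' hi' => ih (h.mono (by lia)) (by lia) i' (by lia)) ha
    obtain ⟨f, g, -, hg⟩ := hK.exact_liftQ (S.obj (ModuleCat.of R R)) (i + 1)
    have hF := h.finAway _ le_rfl
    rw [show (d + 1 - (i + 1) : ℤ).toNat = (d - (i + 1) : ℤ).toNat + 1 by lia] at hF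
    refine .of_torsionBy hx (h.torsion _) hF ?_
    rw [← hg]
    exact .of_surjective g.rangeRestrict g.surjective_rangeRestrict
      (ihJ _ (hJ ▸ hlt) (h.of_isFiberSMul hK fun i' hi' => hxf i' (by lia)) rfl)

include hS in
theorem SocleHyp.finite_hom (h : SocleHyp S 𝔞 d d X)
    (hfin : ∀ i > (d : ℤ), Module.Finite R (S.obj (ModuleCat.of R R) ⟶ X⟦i⟧)) (i : ℤ) :
    Module.Finite R (S.obj (ModuleCat.of R (R ⧸ 𝔞)) ⟶ X⟦i⟧) := by
  induction hJ : (cohomologyAnnihilator S X).radical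
      using WellFoundedGT.induction generalizing X with
  | _ J ihJ =>
  by_cases ha : 𝔞 ≤ (cohomologyAnnihilator S X).radical
  · refine finite_hom_of_finite hS h.coconnective (fun i _ => ?_) le_rfl _
    rcases le_or_gt i d with hi | hi
    · exact finite_hom_of_le_radical hS h.coconnective h.finite ha i hi
    · exact hfin i hi
  obtain ⟨x, hx, hxf, K, hK, hlt⟩ := h.exists_fiber le_rfl le_rfl
    (fun i' hi' => h.socleFinAway hS le_rfl hi') ha
  have := ihJ _ (hJ ▸ hlt) (h.of_isFiberSMul hK fun i hi => hxf i hi.le) (fun i hi => by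
    obtain ⟨f, g, hfg, -⟩ := hK.exact_liftQ (S.obj (ModuleCat.of R R)) i
    have := hfin i hi
    rcases eq_or_lt_of_le (show (d : ℤ) ≤ i - 1 by lia) with h | h
    · have hF := hxf (i - 1) h.ge
      rw [show (d - (i - 1) : ℤ).toNat = 0 by lia] at hF
      have := hF.finite
      exact .of_function_exact hfg
    · have := hfin (i - 1) h
      exact .of_function_exact hfg) rfl
  obtain ⟨φ, δ, H⟩ := hK
  refine .of_surjective (φ _ i) fun z => ((H _ i).2.2 z).1 ?_
  exact smul_hom_eq_zero (fun z => smul_quotient_eq_zero hx z) z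

end Generic

theorem IsFiberSMul.finite_hom {R : Type*} [CommRing R] [IsNoetherianRing R] {𝒟 : Type*}
    [Category 𝒟] [Preadditive 𝒟] [HasShift 𝒟 ℤ] [Linear R 𝒟] {x : R} {X K : 𝒟}
    (hK : IsFiberSMul x X K) (A : 𝒟) (i : ℤ) [Module.Finite R (A ⟶ X⟦i - 1⟧)]
    [Module.Finite R (A ⟶ X⟦i⟧)] : Module.Finite R (A ⟶ K⟦i⟧) := by
  obtain ⟨φ, δ, h⟩ := hK
  exact .of_function_exact (h A i).2.1

theorem Module.Finite.of_ker_lsmul {R A : Type*} [CommRing R] [IsNoetherianRing R]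
    [AddCommGroup A] [Module R A] {x : R} (hx : Module.Finite R (LinearMap.lsmul R A x).ker)
    (k : ℕ) (hk : ∀ z : A, x ^ k • z = 0) : Module.Finite R A := by
  suffices ∀ k, Module.Finite R (LinearMap.lsmul R A (x ^ k)).ker by
    have h := this k
    rw [show LinearMap.lsmul R A (x ^ k) = 0 from LinearMap.ext hk, LinearMap.ker_zero] at h
    exact .of_surjective _ (Submodule.topEquiv (R := R) (M := A)).surjective
  intro k
  induction k with
  | zero =>
    rw [pow_zero, LinearMap.ker_eq_bot.2 fun a b h => by simpa using h]
    infer_instance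
  | succ k ih =>
    let f : (LinearMap.lsmul R A x).ker →ₗ[R] (LinearMap.lsmul R A (x ^ (k + 1))).ker :=
      Submodule.inclusion fun z hz => by
        have : x • z = 0 := hz
        simp [pow_succ, mul_smul, this]
    let g : (LinearMap.lsmul R A (x ^ (k + 1))).ker →ₗ[R] (LinearMap.lsmul R A (x ^ k)).ker :=
      (LinearMap.lsmul R A x).restrict fun z hz => by
        have : x ^ (k + 1) • z = 0 := hz
        simpa [pow_succ, mul_smul, smul_comm (x ^ k) x] using this
    refine .of_function_exact (f := f) (g := g) fun z => ⟨fun hz => ?_, ?_⟩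
    · exact ⟨⟨z, congrArg Subtype.val hz⟩, rfl⟩
    · rintro ⟨z, rfl⟩
      exact Subtype.ext z.2

theorem IsFiberSMul.finite_hom_of_smul {R : Type*} [CommRing R] [IsNoetherianRing R] {𝒟 : Type*}
    [Category 𝒟] [Preadditive 𝒟] [HasShift 𝒟 ℤ] [Linear R 𝒟] {x : R} {X K : 𝒟}
    (hK : IsFiberSMul x X K) (A : 𝒟) (i : ℤ) [Module.Finite R (A ⟶ K⟦i⟧)] (k : ℕ)
    (hk : ∀ z : A ⟶ X⟦i⟧, x ^ k • z = 0) : Module.Finite R (A ⟶ X⟦i⟧) := by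
  obtain ⟨φ, δ, h⟩ := hK
  refine .of_ker_lsmul (x := x) ?_ k hk
  rw [LinearMap.exact_iff.1 (h A i).2.2]
  infer_instance

section TwoGenerators

variable {R : Type u} [CommRing R] [IsNoetherianRing R] {𝒟 : Type*} [Category 𝒟] [Preadditive 𝒟]
  [HasZeroObject 𝒟] [HasShift 𝒟 ℤ] [∀ n : ℤ, (shiftFunctor 𝒟 n).Additive] [Pretriangulated 𝒟]
  [Linear R 𝒟] [∀ n : ℤ, (shiftFunctor 𝒟 n).Linear R] {S : ModuleCat.{u} R ⥤ 𝒟}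
  (hS : IsTriangleValued S) [S.Additive] [S.Linear R] {𝔞 : Ideal R}

include hS in
theorem finite_hom_of_radical_span_pair {X : 𝒟} (hX : IsCoconnective S X) {x y : R}
    (hxy : (Ideal.span {x, y}).radical = 𝔞.radical)
    (h0 : ∀ i > (0 : ℤ), Subsingleton (S.obj (ModuleCat.of R R) ⟶ X⟦i⟧))
    (h : ∀ i ≤ (2 : ℤ), Module.Finite R (S.obj (ModuleCat.of R (R ⧸ 𝔞)) ⟶ X⟦i⟧)) (i : ℤ) :
    Module.Finite R (S.obj (ModuleCat.of R (R ⧸ 𝔞)) ⟶ X⟦i⟧) := by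
  obtain ⟨K, hK⟩ := exists_isFiberSMul x X
  obtain ⟨L, hL⟩ := exists_isFiberSMul y K
  have hLc := hL.isCoconnective (hK.isCoconnective hX)
  have hKf : ∀ i ≤ (2 : ℤ), Module.Finite R (S.obj (ModuleCat.of R (R ⧸ 𝔞)) ⟶ K⟦i⟧) :=
      fun i hi => by
    have := h i hi
    have := h (i - 1) (by lia)
    exact hK.finite_hom _ _
  have hLf : ∀ i ≤ (2 : ℤ), Module.Finite R (S.obj (ModuleCat.of R (R ⧸ 𝔞)) ⟶ L⟦i⟧) :=
      fun i hi => by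
    have := hKf i hi
    have := hKf (i - 1) (by lia)
    exact hL.finite_hom _ _
  have hrad : 𝔞 ≤ (cohomologyAnnihilator S L).radical := by
    refine Ideal.le_radical.trans ?_
    rw [← hxy, Ideal.radical_le_radical_iff, Ideal.span_le, Set.insert_subset_iff,
      Set.singleton_subset_iff]
    exact ⟨hL.radical_le hK.mem_radical, hL.mem_radical⟩
  have hLR (i : ℤ) : Module.Finite R (S.obj (ModuleCat.of R R) ⟶ L⟦i⟧) := by
    rcases le_or_gt i 2 with hi | hi
    · exact finite_hom_of_le_radical hS hLc hLf hrad i hi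
    · have := h0 i (by lia)
      have := h0 (i - 1) (by lia)
      have := h0 (i - 1 - 1) (by lia)
      have := hK.finite_hom (S.obj (ModuleCat.of R R)) i
      have := hK.finite_hom (S.obj (ModuleCat.of R R)) (i - 1)
      exact hL.finite_hom _ _
  have hpow {r : R} (hr : r ∈ Ideal.span {x, y}) : ∃ k, ∀ z : R ⧸ 𝔞, r ^ k • z = 0 := by
    obtain ⟨k, hk⟩ : r ∈ 𝔞.radical := hxy ▸ Ideal.le_radical hr
    refine ⟨k, fun z => ?_⟩
    obtain ⟨z, rfl⟩ := Ideal.Quotient.mk_surjective z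
    exact Ideal.Quotient.eq_zero_iff_mem.2 (𝔞.mul_mem_right z hk)
  have hkill {r : R} (hr : r ∈ Ideal.span {x, y}) :
      ∃ k, ∀ (Y : 𝒟) (z : S.obj (ModuleCat.of R (R ⧸ 𝔞)) ⟶ Y), r ^ k • z = 0 := by
    obtain ⟨k, hk⟩ := hpow hr
    exact ⟨k, fun Y z => smul_hom_eq_zero hk z⟩
  obtain ⟨k, hk⟩ := hkill (Ideal.subset_span (Set.mem_insert x _))
  obtain ⟨l, hl⟩ := hkill (Ideal.subset_span (Set.mem_insert_of_mem x rfl))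
  have := finite_hom_of_finite hS hLc (fun i _ => hLR i) (le_refl i) (R ⧸ 𝔞)
  have := hL.finite_hom_of_smul _ i l (hl _)
  exact hK.finite_hom_of_smul _ i k (hk _)

end TwoGenerators

section Derived

variable {R : Type u} [CommRing R]

theorem isTriangleValued_singleFunctor [HasDerivedCategory (ModuleCat.{u} R)] :
    IsTriangleValued (DerivedCategory.singleFunctor (ModuleCat.{u} R) 0) :=
  fun _ hT => ⟨_, hT.singleTriangle_distinguished⟩

theorem isCoconnective_singleFunctor [HasDerivedCategory (ModuleCat.{u} R)]
    (N : ModuleCat.{u} R) :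
    IsCoconnective (DerivedCategory.singleFunctor (ModuleCat.{u} R) 0)
      ((DerivedCategory.singleFunctor (ModuleCat.{u} R) 0).obj N) := fun L i hi => by
  have := DerivedCategory.TStructure.t.isGE_shift
    ((DerivedCategory.singleFunctor (ModuleCat.{u} R) 0).obj N) 0 i (-i)
  exact subsingleton_of_forall_eq 0 fun f => DerivedCategory.TStructure.t.zero f 0 (-i)

/-- Derived morphisms out of `R` in degree zero. -/
noncomputable def ModuleCat.extSelfZeroEquiv (N : ModuleCat.{u} R) :
    Abelian.Ext (ModuleCat.of R R) N 0 ≃ₗ[R] N :=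
  Abelian.Ext.linearEquiv₀ ≪≫ₗ ModuleCat.homLinearEquiv ≪≫ₗ LinearMap.ringLmapEquivSelf R R N

end Derived

section Coheight

variable {R : Type u} [CommRing R]

theorem exists_ltSeries_of_notMem_cohtLT {n : ℕ} {p : PrimeSpectrum R} (hp : p ∉ cohtLT R n) :
    ∃ s : LTSeries (PrimeSpectrum R), s.length = n ∧ s.head = p := by
  induction n generalizing p with
  | zero => exact ⟨RelSeries.singleton _ p, rfl, rfl⟩
  | succ n ih =>
    obtain ⟨q, hpq, hq⟩ : ∃ q, p < q ∧ q ∉ cohtLT R n := by simpa [cohtLT] using hp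
    obtain ⟨s, hs, rfl⟩ := ih hq
    exact ⟨s.cons p hpq, by simp [hs], by simp⟩

theorem zeroLocus_subset_cohtLT {𝔞 : Ideal R} {n : ℕ} (h : ringKrullDim (R ⧸ 𝔞) ≤ n) :
    PrimeSpectrum.zeroLocus (𝔞 : Set R) ⊆ cohtLT R (n + 1) := by
  intro p hp
  by_contra hpn
  obtain ⟨s, hs, rfl⟩ := exists_ltSeries_of_notMem_cohtLT hpn
  rw [ringKrullDim_quotient] at h
  let t : LTSeries (PrimeSpectrum.zeroLocus (𝔞 : Set R)) :=
    { length := s.length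
      toFun i := ⟨s i, (show 𝔞 ≤ s.head.asIdeal from hp).trans (LTSeries.head_le s i)⟩
      step := s.step }
  have := (Order.LTSeries.length_le_krullDim t).trans h
  change ((s.length : ℕ) : WithBot ℕ∞) ≤ n at this
  rw [hs] at this
  have : n + 1 ≤ n := by exact_mod_cast this
  lia

theorem mem_cohtLT_of_lt {p q : PrimeSpectrum R} (hqp : q < p) {n : ℕ}
    (h : ringKrullDim R ≤ n) : p ∈ cohtLT R n := by
  by_contra hpn
  obtain ⟨s, hs, rfl⟩ := exists_ltSeries_of_notMem_cohtLT hpn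
  have := (Order.LTSeries.length_le_krullDim (s.cons q hqp)).trans h
  rw [RelSeries.cons_length, hs] at this
  have : n + 1 ≤ n := by exact_mod_cast this
  lia

end Coheight

section Torsion

variable {R : Type*} [CommRing R] {N : Type*} [AddCommGroup N] [Module R N]

theorem FinAway.of_support_subset {W : Set (PrimeSpectrum R)} (h : Module.support R N ⊆ W) :
    FinAway W N := by
  refine ⟨⊥, Submodule.fg_bot, fun p hp z => ?_⟩
  obtain ⟨s, hs, h⟩ := Module.notMem_support_iff'.1 (fun h' => hp (h h')) z
  exact ⟨s, hs, by simp [h]⟩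

theorem support_subset_zeroLocus_of_torsion {𝔞 : Ideal R}
    (hN : ∀ z : N, ∃ k : ℕ, ∀ r ∈ 𝔞 ^ k, r • z = 0) :
    Module.support R N ⊆ PrimeSpectrum.zeroLocus (𝔞 : Set R) := by
  intro p hp a ha
  obtain ⟨z, hz⟩ := Module.mem_support_iff_exists_annihilator.1 hp
  obtain ⟨k, hk⟩ := hN z
  refine p.2.mem_of_pow_mem k (hz (Submodule.mem_annihilator_span_singleton _ _ |>.2 ?_))
  exact hk _ (Ideal.pow_mem_pow ha k)

theorem finite_torsionBySet_of_finite_hom {I : Ideal R} [Module.Finite R (R ⧸ I →ₗ[R] N)] :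
    Module.Finite R (Submodule.torsionBySet R N I) := by
  have h (f : R ⧸ I →ₗ[R] N) : f 1 ∈ Submodule.torsionBySet R N I := by
    rw [Submodule.mem_torsionBySet_iff]
    rintro ⟨r, hr⟩
    change r • f 1 = 0
    rw [← map_smul, Algebra.smul_def, mul_one,
      Ideal.Quotient.algebraMap_eq, Ideal.Quotient.eq_zero_iff_mem.2 hr, map_zero]
  refine .of_surjective ((LinearMap.applyₗ (1 : R ⧸ I)).codRestrict _ h) fun z => ?_
  refine ⟨I.liftQ (LinearMap.toSpanSingleton R N z) fun r hr => ?_, Subtype.ext ?_⟩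
  · exact (Submodule.mem_torsionBySet_iff _ _).1 z.2 ⟨r, hr⟩
  · exact one_smul R z.1

variable [IsNoetherianRing R] {𝔞 : Ideal R}

theorem finite_quotient_torsionBySet (I : Ideal R) {B : Submodule R N} (hB : B.FG)
    (h : ∀ r ∈ I, ∀ z : N, r • z ∈ B) : Module.Finite R (N ⧸ Submodule.torsionBySet R N I) := by
  obtain ⟨s, hs⟩ := IsNoetherian.noetherian I
  have := isNoetherian_of_fg_of_noetherian B hB
  have hsI (r : s) : (r : R) ∈ I := hs ▸ Submodule.subset_span r.2
  let f : N →ₗ[R] s → B := LinearMap.pi fun r =>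
    (LinearMap.lsmul R N (r : R)).codRestrict B (h r (hsI r))
  have hf : Submodule.torsionBySet R N I = f.ker := by
    rw [← hs, ← Ideal.span, ← Submodule.torsionBySet_eq_torsionBySet_span]
    ext z
    rw [Submodule.mem_torsionBySet_iff, LinearMap.mem_ker, funext_iff]
    exact forall_congr' fun r =>
      show _ ↔ f z r = 0 from ⟨fun h => Subtype.ext h, fun h => congrArg Subtype.val h⟩
  rw [hf]
  exact .of_injective (f.ker.liftQ f le_rfl)
    (LinearMap.ker_eq_bot.1 (Submodule.ker_liftQ_eq_bot _ _ _ le_rfl))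

theorem finite_torsionBySet_pow [Module.Finite R (Submodule.torsionBySet R N 𝔞)] (k : ℕ) :
    Module.Finite R (Submodule.torsionBySet R N ((𝔞 ^ k : Ideal R) : Set R)) := by
  induction k with
  | zero =>
    have : Submodule.torsionBySet R N ((𝔞 ^ 0 : Ideal R) : Set R) = ⊥ :=
      (Submodule.eq_bot_iff _).2 fun z hz =>
        by simpa using (Submodule.mem_torsionBySet_iff _ _).1 hz ⟨1, by simp⟩
    rw [this]
    infer_instance
  | succ k ih =>
    set T := Submodule.torsionBySet R N ((𝔞 ^ (k + 1) : Ideal R) : Set R)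
    set B := Submodule.torsionBySet R N ((𝔞 ^ k : Ideal R) : Set R)
    have hB : (B.comap T.subtype).FG := fg_comap_of_injective T.subtype_injective
      (Module.Finite.iff_fg.1 ih)
    have := finite_quotient_torsionBySet (N := T) 𝔞 hB fun r hr z => by
      refine (Submodule.mem_torsionBySet_iff _ _).2 fun a => ?_
      have := (Submodule.mem_torsionBySet_iff _ _).1 z.2 ⟨a * r, by
        rw [pow_succ]; exact Ideal.mul_mem_mul a.2 hr⟩
      simpa [mul_smul] using this
    have : Module.Finite R (Submodule.torsionBySet R T 𝔞) := by
      refine .of_injective (N := Submodule.torsionBySet R N 𝔞)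
        (T.subtype.restrict fun z hz => ?_) ?_
      · refine (Submodule.mem_torsionBySet_iff _ _).2 fun a => ?_
        exact congrArg Subtype.val ((Submodule.mem_torsionBySet_iff _ _).1 hz a)
      · intro a b h
        have h' := congrArg Subtype.val h
        exact Subtype.ext (Subtype.ext h')
    exact Module.Finite.of_submodule_quotient (Submodule.torsionBySet R T (𝔞 : Set R))

theorem PrimeSpectrum.exists_lt_of_torsion_le {p : PrimeSpectrum R} (hap : 𝔞 ≤ p.asIdeal)
    (h : ∀ r : R, (∃ k : ℕ, ∀ a ∈ 𝔞 ^ k, a * r = 0) → r ∈ p.asIdeal) : ∃ q, q < p := by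
  by_contra! hp
  let Q : Ideal R := RingHom.ker (algebraMap R (Localization.AtPrime p.asIdeal))
  have hQ : 𝔞 ≤ Q.radical := fun r hr => by
    obtain ⟨k, s, hs, hk⟩ := exists_mul_pow_smul_eq_zero (N := R) (fun q _ => hp q) (hap hr) 1
    refine ⟨k, (IsLocalization.map_eq_zero_iff p.asIdeal.primeCompl _ _).2 ⟨⟨s, hs⟩, ?_⟩⟩
    simpa using hk
  obtain ⟨k, hk⟩ := Ideal.exists_pow_le_of_le_radical_of_fg hQ (IsNoetherian.noetherian 𝔞)
  have hp' : p ∉ Module.support R (𝔞 ^ k : Ideal R) := by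
    refine Module.notMem_support_iff'.2 fun z => ?_
    obtain ⟨s, hs⟩ := (IsLocalization.map_eq_zero_iff p.asIdeal.primeCompl _ _).1 (hk z.2)
    exact ⟨s, s.2, Subtype.ext hs⟩
  rw [Module.mem_support_iff_of_finite] at hp'
  obtain ⟨s, hs, hsp⟩ := SetLike.not_le_iff_exists.1 hp'
  refine hsp (h s ⟨k, fun a ha => ?_⟩)
  rw [mul_comm]
  exact congrArg Subtype.val (Module.mem_annihilator.1 hs ⟨a, ha⟩)

theorem exists_pow_mul_eq_zero (𝔞 : Ideal R) : ∃ (J : Ideal R) (k : ℕ),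
    (∀ r : R, (∃ k : ℕ, ∀ a ∈ 𝔞 ^ k, a * r = 0) → r ∈ J) ∧ ∀ a ∈ 𝔞 ^ k, ∀ r ∈ J, a * r = 0 := by
  let c : ℕ →o Ideal R := ⟨fun k => Submodule.torsionBySet R R ((𝔞 ^ k : Ideal R) : Set R),
    fun i j hij => Submodule.torsionBySet_le_torsionBySet_pow i j hij 𝔞⟩
  obtain ⟨n, hn⟩ := monotone_stabilizes_iff_noetherian.2 inferInstance c
  refine ⟨c n, n, fun r ⟨k, hk⟩ => ?_, fun a ha r hr => ?_⟩
  · have : r ∈ c (max n k) := c.monotone (le_max_right n k)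
      ((Submodule.mem_torsionBySet_iff _ _).2 fun a => hk a a.2)
    rwa [hn _ (le_max_left n k)]
  · exact (Submodule.mem_torsionBySet_iff _ _).1 hr ⟨a, ha⟩

theorem FinAway.of_ringKrullDim_le {n : ℕ} (hR : ringKrullDim R ≤ n)
    (hN : ∀ z : N, ∃ k : ℕ, ∀ r ∈ 𝔞 ^ k, r • z = 0)
    [Module.Finite R (Submodule.torsionBySet R N 𝔞)] : FinAway (cohtLT R n) N := by
  obtain ⟨J, k, hJ, hk⟩ := exists_pow_mul_eq_zero 𝔞
  have : Module.Finite R (N ⧸ Submodule.torsionBySet R N J) :=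
    finite_quotient_torsionBySet J
      (Module.Finite.iff_fg.1 (finite_torsionBySet_pow (N := N) (𝔞 := 𝔞) k)) fun r hr z =>
        (Submodule.mem_torsionBySet_iff _ _).2 fun a => by
          rw [smul_smul, hk a a.2 r hr, zero_smul]
  have h : FinAway (cohtLT R n) (Submodule.torsionBySet R N (J : Set R)) := by
    refine .of_support_subset fun p hp => ?_
    have hap := support_subset_zeroLocus_of_torsion (𝔞 := 𝔞)
      (fun z => (hN z.1).imp fun k h r hr => Subtype.ext (h r hr)) hp
    obtain ⟨q, hq⟩ := p.exists_lt_of_torsion_le hap fun r hr => by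
      obtain ⟨z, hz⟩ := Module.mem_support_iff_exists_annihilator.1 hp
      refine hz (Submodule.mem_annihilator_span_singleton _ _ |>.2 (Subtype.ext ?_))
      exact (Submodule.mem_torsionBySet_iff _ _).1 z.2 ⟨r, hJ r hr⟩
    exact mem_cohtLT_of_lt hq hR
  exact .of_exact _ _ (LinearMap.exact_subtype_mkQ _) h .of_finite

end Torsion

section FiniteExt

variable {R : Type u} [CommRing R] {N : ModuleCat.{u} R} {𝔞 : Ideal R}

theorem finite_torsionBySet_of_finite_ext
    [h : Module.Finite R (Abelian.Ext (.of R (R ⧸ 𝔞)) N 0)] :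
    Module.Finite R (Submodule.torsionBySet R N 𝔞) :=
  have : Module.Finite R (R ⧸ 𝔞 →ₗ[R] N) :=
    .equiv (Abelian.Ext.linearEquiv₀ (R := R) ≪≫ₗ
      ModuleCat.homLinearEquiv (M := .of R (R ⧸ 𝔞)) (N := N) (S := R))
  finite_torsionBySet_of_finite_hom

variable [IsNoetherianRing R]

/-- The numerical invariants of the pair `(R, 𝔞)` for which the finiteness of `Ext^i(R ⧸ 𝔞, N)`
for `i ≤ 2` is enough for the cofiniteness of a torsion module. -/
theorem finite_ext_of_finite_ext_le_two
    (hcase : ringKrullDim (R ⧸ 𝔞) ≤ 2 ∨ ringKrullDim R ≤ 3 ∨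
      ∃ x y : R, (Ideal.span {x, y}).radical = 𝔞.radical)
    (hN : ∀ z : N, ∃ k : ℕ, ∀ r ∈ 𝔞 ^ k, r • z = 0)
    (h : ∀ i ≤ 2, Module.Finite R (Abelian.Ext (.of R (R ⧸ 𝔞)) N i)) (i : ℕ) :
    Module.Finite R (Abelian.Ext (.of R (R ⧸ 𝔞)) N i) := by
  let := HasDerivedCategory.standard (ModuleCat.{u} R)
  let S := DerivedCategory.singleFunctor (ModuleCat.{u} R) 0
  have hS : IsTriangleValued S := isTriangleValued_singleFunctor
  have hX : IsCoconnective S (S.obj N) := isCoconnective_singleFunctor N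
  let e (L : ModuleCat.{u} R) (i : ℕ) : Abelian.Ext L N i ≃ₗ[R] (S.obj L ⟶ (S.obj N)⟦(i : ℤ)⟧) :=
    Abelian.Ext.homLinearEquiv
  have hfin : ∀ i ≤ (2 : ℤ), Module.Finite R (S.obj (.of R (R ⧸ 𝔞)) ⟶ (S.obj N)⟦i⟧) := by
    intro i hi
    rcases lt_or_ge i 0 with h0 | h0
    · have := hX (.of R (R ⧸ 𝔞)) i h0
      infer_instance
    · lift i to ℕ using h0
      have := h i (by lia)
      exact .equiv (e _ i)
  have h0 : ∀ i ≠ (0 : ℤ), Subsingleton (S.obj (.of R R) ⟶ (S.obj N)⟦i⟧) := by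
    intro i hi
    rcases lt_or_ge i 0 with h0 | h0
    · exact hX _ i h0
    · obtain ⟨n, rfl⟩ : ∃ n : ℕ, i = (n + 1 : ℕ) := ⟨(i - 1).toNat, by lia⟩
      have : Projective (ModuleCat.of R R) := ModuleCat.projective_of_free
        (Module.Basis.singleton Unit R)
      have := Abelian.Ext.subsingleton_of_projective (ModuleCat.of R R) N n
      exact (e _ (n + 1)).symm.injective.subsingleton
  suffices Module.Finite R (S.obj (.of R (R ⧸ 𝔞)) ⟶ (S.obj N)⟦(i : ℤ)⟧) from .equiv (e _ i).symm
  let e0 : N ≃ₗ[R] (S.obj (.of R R) ⟶ (S.obj N)⟦(0 : ℤ)⟧) :=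
    N.extSelfZeroEquiv.symm ≪≫ₗ e (.of R R) 0
  have htwo (hW : FinAway (cohtLT R 3) N) :
      Module.Finite R (S.obj (.of R (R ⧸ 𝔞)) ⟶ (S.obj N)⟦(i : ℤ)⟧) := by
    refine SocleHyp.finite_hom (d := 2) hS ⟨hX, fun i z => ?_, fun i hi => ?_, hfin⟩
      (fun i hi => ?_) i
    · rcases eq_or_ne i 0 with rfl | hi
      · obtain ⟨z, rfl⟩ := e0.surjective z
        exact (hN z).imp fun k hk r hr => by rw [← map_smul, hk r hr, map_zero]
      · have := h0 i hi
        exact ⟨0, fun r hr => Subsingleton.elim _ _⟩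
    · rcases eq_or_ne i 0 with rfl | hi
      · exact hW.of_surjective e0.toLinearMap e0.surjective
      · have := h0 i hi
        exact .of_finite
    · have := h0 i (by lia)
      infer_instance
  have := h 0 (by lia)
  have : Module.Finite R (Submodule.torsionBySet R N 𝔞) := finite_torsionBySet_of_finite_ext
  rcases hcase with hd | hd | ⟨x, y, hxy⟩
  · exact htwo (.of_support_subset
      ((support_subset_zeroLocus_of_torsion hN).trans (zeroLocus_subset_cohtLT hd)))
  · exact htwo (.of_ringKrullDim_le hd hN)
  · exact finite_hom_of_radical_span_pair hS hX hxy (fun i hi => h0 i (by lia)) hfin i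

end FiniteExt

end

section

open Limits Pretriangulated Opposite

namespace CategoryTheory.ShortComplex

variable {R : Type u} [Ring R] (S : ShortComplex (ModuleCat.{v} R))

/-- The class in homology of a cycle. -/
noncomputable def moduleCatHomologyMk : LinearMap.ker S.g.hom →ₗ[R] S.homology :=
  (S.moduleCatCyclesIso.inv ≫ S.homologyπ).hom

theorem moduleCatHomologyMk_surjective : Function.Surjective S.moduleCatHomologyMk :=
  (ModuleCat.epi_iff_surjective (S.moduleCatCyclesIso.inv ≫ S.homologyπ)).mp inferInstance

theorem moduleCatHomologyMk_eq_zero_iff (x : LinearMap.ker S.g.hom) :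
    S.moduleCatHomologyMk x = 0 ↔ ∃ y, S.f y = x.1 := by
  have h : S.moduleCatHomologyMk x = S.moduleCatHomologyIso.inv
      (S.moduleCatLeftHomologyData.π x) := by
    simp only [moduleCatHomologyMk, moduleCatCyclesIso_inv_π]
    rfl
  have hinj : Function.Injective S.moduleCatHomologyIso.inv :=
    (ModuleCat.mono_iff_injective _).mp inferInstance
  rw [h, map_eq_zero_iff _ hinj]
  refine (Submodule.Quotient.mk_eq_zero _).trans ?_
  constructor
  · rintro ⟨y, hy⟩
    exact ⟨y, congrArg Subtype.val hy⟩
  · rintro ⟨y, hy⟩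
    exact ⟨y, Subtype.ext hy⟩

theorem homologyMap_moduleCatHomologyMk {S S' : ShortComplex (ModuleCat.{v} R)} (φ : S ⟶ S')
    (x : LinearMap.ker S.g.hom) (hx : φ.τ₂ x.1 ∈ LinearMap.ker S'.g.hom) :
    homologyMap φ (S.moduleCatHomologyMk x) = S'.moduleCatHomologyMk ⟨φ.τ₂ x.1, hx⟩ := by
  have hinj : Function.Injective S'.iCycles := (ModuleCat.mono_iff_injective _).mp inferInstance
  have hi (T : ShortComplex (ModuleCat.{v} R)) (z : LinearMap.ker T.g.hom) :
      T.iCycles (T.moduleCatCyclesIso.inv z) = z.1 :=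
    ConcreteCategory.congr_hom T.moduleCatCyclesIso_inv_iCycles z
  have h : cyclesMap φ (S.moduleCatCyclesIso.inv x) =
      S'.moduleCatCyclesIso.inv (⟨φ.τ₂ x.1, hx⟩ : LinearMap.ker S'.g.hom) := by
    apply hinj
    rw [hi]
    refine (ConcreteCategory.congr_hom (cyclesMap_i φ) _).trans ?_
    exact congrArg φ.τ₂ (hi S x)
  refine (ConcreteCategory.congr_hom (homologyπ_naturality φ) _).trans ?_
  exact congrArg S'.homologyπ h

end CategoryTheory.ShortComplex

section

variable {R : Type u} [CommRing R] {C : Type*} [Category.{v} C] [Abelian C] [Linear R C]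
  [EnoughProjectives C]

namespace CategoryTheory.ProjectiveResolution

section
variable {X : C} (P : ProjectiveResolution X) (Y : C) (n : ℕ)

/-- The complex of homomorphisms from a projective resolution to `Y` around degree `n`. -/
noncomputable abbrev homShortComplex : ShortComplex (ModuleCat.{v} R) :=
  ((((((linearYoneda R C).obj Y).rightOp.mapHomologicalComplex _).obj P.complex)).sc n).unop

/-- `Ext` is the homology of the complex of homomorphisms from a projective resolution. -/
noncomputable def homologyIsoExt :
    (P.homShortComplex (R := R) Y n).homology ≅ ((Ext R C n).obj (op X)).obj Y :=
  (P.homShortComplex (R := R) Y n).homologyOpIso.unop ≪≫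
   (P.isoLeftDerivedObj ((linearYoneda R C).obj Y).rightOp n).unop

end

variable {X X' : C} {f : X' ⟶ X} {P : ProjectiveResolution X} {P' : ProjectiveResolution X'}
  (Y : C) (n : ℕ)

variable (R) in
/-- The map induced by a morphism of projective resolutions. -/
noncomputable abbrev Hom.homShortComplexMap (φ : Hom P' P f) :
    P.homShortComplex (R := R) Y n ⟶ P'.homShortComplex Y n :=
  ShortComplex.unopMap ((HomologicalComplex.shortComplexFunctor _ _ n).map
    ((((linearYoneda R C).obj Y).rightOp.mapHomologicalComplex _).map φ.hom))

theorem homologyIsoExt_hom_naturality (φ : Hom P' P f) :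
    (P.homologyIsoExt (R := R) Y n).hom ≫ ((Ext R C n).map f.op).app Y =
      ShortComplex.homologyMap (φ.homShortComplexMap R Y n) ≫
        (P'.homologyIsoExt Y n).hom := by
  have h1 := congrArg Quiver.Hom.unop (isoLeftDerivedObj_hom_naturality f P' P φ.hom
    (by simpa using φ.hom_f_zero_comp_π_f_zero) ((linearYoneda R C).obj Y).rightOp n)
  have h2 := congrArg Quiver.Hom.unop
    (ShortComplex.homologyOpIso_hom_naturality (φ.homShortComplexMap R Y n))
  let a := (P.homShortComplex (R := R) Y n).homologyOpIso.hom.unop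
  let b := (P'.isoLeftDerivedObj ((linearYoneda R C).obj Y).rightOp n).hom.unop
  exact (Category.assoc _ _ _).trans ((congrArg (a ≫ ·) h1).trans
    ((Category.assoc _ _ _).symm.trans ((congrArg (· ≫ b) h2).trans (Category.assoc _ _ _))))

section
variable (P) {Y n}

omit [EnoughProjectives C] in
theorem mem_ker_homShortComplex_g {z : P.complex.X n ⟶ Y} :
    z ∈ LinearMap.ker (P.homShortComplex (R := R) Y n).g.hom ↔ P.complex.d (n + 1) n ≫ z = 0 := by
  have h : P.complex.d ((ComplexShape.down ℕ).prev n) n ≫ z = 0 ↔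
      P.complex.d (n + 1) n ≫ z = 0 := by
    rw [show (ComplexShape.down ℕ).prev n = n + 1 by simp]
  exact h

omit [EnoughProjectives C] in
theorem extMk_eq_zero_iff_exists_d_next [HasExt.{v} C] (z : P.complex.X n ⟶ Y)
    (hz : P.complex.d (n + 1) n ≫ z = 0) :
    P.extMk z (n + 1) rfl hz = 0 ↔
      ∃ y : P.complex.X ((ComplexShape.down ℕ).next n) ⟶ Y,
        P.complex.d n ((ComplexShape.down ℕ).next n) ≫ y = z := by
  cases n with
  | zero => 
    have h : P.complex.d 0 ((ComplexShape.down ℕ).next 0) = 0 := P.complex.shape _ _ (by simp)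
    simp only [h, zero_comp, exists_const]
    refine ⟨fun h0 ↦ ?_, ?_⟩
    · rw [← P.extEquivCohomologyClass.apply_eq_iff_eq,
        extEquivCohomologyClass_extMk, extEquivCohomologyClass_zero,
        CochainComplex.HomComplex.CohomologyClass.mk_eq_zero_iff,
        CochainComplex.HomComplex.Cocycle.toSingleMk_mem_coboundaries_iff _ _ _ _ _ 1
          (by lia)] at h0
      obtain ⟨g, hg⟩ := h0
      have h1 : P.cochainComplex.d (-(0 : ℕ)) 1 = 0 :=
        (P.cochainComplex.isZero_of_isStrictlyLE 0 1).eq_of_tgt _ _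
      rw [h1, zero_comp] at hg
      rw [← cancel_epi (P.cochainComplexXIso (-(0 : ℕ)) 0 rfl).hom, comp_zero, ← hg]
    · rintro rfl
      simp
  | succ p => 
    rw [P.extMk_eq_zero_iff _ _ _ _ p rfl]
    have h : (ComplexShape.down ℕ).next (p + 1) = p := ChainComplex.next_nat_succ p
    rw [h]

variable (R Y n) in
/-- The class in `Ext` of a cocycle in the complex of homomorphisms from a projective
resolution. -/
noncomputable def cocycleToExt :
    LinearMap.ker (P.homShortComplex (R := R) Y n).g.hom →ₗ[R] ((Ext R C n).obj (op X)).obj Y :=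
  (P.homologyIsoExt Y n).hom.hom ∘ₗ (P.homShortComplex (R := R) Y n).moduleCatHomologyMk

theorem cocycleToExt_surjective : Function.Surjective (P.cocycleToExt R Y n) :=
  ((ModuleCat.epi_iff_surjective (P.homologyIsoExt (R := R) Y n).hom).mp inferInstance).comp
    (P.homShortComplex (R := R) Y n).moduleCatHomologyMk_surjective

theorem cocycleToExt_eq_zero_iff
    (z : LinearMap.ker (P.homShortComplex (R := R) Y n).g.hom) :
    P.cocycleToExt R Y n z = 0 ↔ ∃ y, (P.homShortComplex (R := R) Y n).f y = z.1 := by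
  have hinj : Function.Injective (P.homologyIsoExt (R := R) Y n).hom :=
    (ModuleCat.mono_iff_injective _).mp inferInstance
  exact (map_eq_zero_iff _ hinj).trans (ShortComplex.moduleCatHomologyMk_eq_zero_iff _ z)

end

theorem map_cocycleToExt (φ : Hom P' P f)
    (z : LinearMap.ker (P.homShortComplex (R := R) Y n).g.hom)
    (hz : φ.hom.f n ≫ (z.1 : P.complex.X n ⟶ Y) ∈
      LinearMap.ker (P'.homShortComplex (R := R) Y n).g.hom) :
    ((Ext R C n).map f.op).app Y (P.cocycleToExt R Y n z) =
      P'.cocycleToExt R Y n ⟨φ.hom.f n ≫ (z.1 : P.complex.X n ⟶ Y), hz⟩ := by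
  refine (ConcreteCategory.congr_hom (homologyIsoExt_hom_naturality (R := R) Y n φ) _).trans ?_
  exact congrArg (P'.homologyIsoExt (R := R) Y n).hom
    (ShortComplex.homologyMap_moduleCatHomologyMk (φ.homShortComplexMap R Y n) z hz)

section

variable [HasExt.{v} C]

variable (P) in
/-- The class in `Abelian.Ext` of a cocycle in the complex of homomorphisms from a projective
resolution. -/
noncomputable def cocycleToAbelianExt :
    LinearMap.ker (P.homShortComplex (R := R) Y n).g.hom →ₗ[R] Abelian.Ext X Y n where
  toFun z := P.extMk (z.1 : P.complex.X n ⟶ Y) (n + 1) rfl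
    ((P.mem_ker_homShortComplex_g (R := R)).mp z.2)
  map_add' z w := (P.add_extMk _ _ _ _ _ _).symm
  map_smul' r z := by
    rw [RingHom.id_apply, Abelian.Ext.smul_eq_comp_mk₀]
    refine Eq.trans ?_ (P.extMk_comp_mk₀ _ _ _ _ _).symm
    congr 1
    exact ((Linear.comp_smul _ _ _ _ _ _).trans
      (congrArg (r • ·) (Category.comp_id (z.1 : P.complex.X n ⟶ Y)))).symm

omit [EnoughProjectives C] in
theorem cocycleToAbelianExt_surjective :
    Function.Surjective (P.cocycleToAbelianExt (R := R) Y n) := by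
  intro x
  obtain ⟨z, hz, rfl⟩ := P.extMk_surjective x (n + 1) rfl
  exact ⟨⟨z, (P.mem_ker_homShortComplex_g (R := R)).mpr hz⟩, rfl⟩

theorem ker_cocycleToExt :
    LinearMap.ker (P.cocycleToExt R Y n) = LinearMap.ker (P.cocycleToAbelianExt Y n) := by
  ext z
  exact (P.cocycleToExt_eq_zero_iff z).trans (P.extMk_eq_zero_iff_exists_d_next _
    ((P.mem_ker_homShortComplex_g (R := R)).mp z.2)).symm

end

end CategoryTheory.ProjectiveResolution

namespace CategoryTheory

variable [HasExt.{v} C]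

open ProjectiveResolution

variable (R) in
/-- The comparison between the two definitions of `Ext`. -/
noncomputable def extLinearEquiv (X Y : C) (n : ℕ) :
    ((Ext R C n).obj (op X)).obj Y ≃ₗ[R] Abelian.Ext X Y n :=
  (((projectiveResolution X).cocycleToExt R Y n).quotKerEquivOfSurjective
      (cocycleToExt_surjective _)).symm ≪≫ₗ
    Submodule.quotEquivOfEq _ _ (ker_cocycleToExt Y n) ≪≫ₗ
    ((projectiveResolution X).cocycleToAbelianExt Y n).quotKerEquivOfSurjective
      (cocycleToAbelianExt_surjective Y n)

theorem extLinearEquiv_cocycleToExt {X Y : C} {n : ℕ}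
    (z : LinearMap.ker ((projectiveResolution X).homShortComplex (R := R) Y n).g.hom) :
    extLinearEquiv R X Y n ((projectiveResolution X).cocycleToExt R Y n z) =
      (projectiveResolution X).cocycleToAbelianExt Y n z := by
  have h : (((projectiveResolution X).cocycleToExt R Y n).quotKerEquivOfSurjective
      (cocycleToExt_surjective _)).symm ((projectiveResolution X).cocycleToExt R Y n z) =
        Submodule.Quotient.mk z := by
    rw [LinearEquiv.symm_apply_eq]
    rfl
  exact congrArg (fun w ↦
    ((projectiveResolution X).cocycleToAbelianExt Y n).quotKerEquivOfSurjective
    (cocycleToAbelianExt_surjective Y n) (Submodule.quotEquivOfEq _ _ (ker_cocycleToExt Y n) w)) h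

theorem extLinearEquiv_naturality {X X' Y : C} {n : ℕ} (f : X' ⟶ X)
    (x : ((Ext R C n).obj (op X)).obj Y) :
    extLinearEquiv R X' Y n (((Ext R C n).map f.op).app Y x) =
      (Abelian.Ext.mk₀ f).comp (extLinearEquiv R X Y n x) (zero_add n) := by
  obtain ⟨z, rfl⟩ := cocycleToExt_surjective (projectiveResolution X) x
  let φ : Hom (projectiveResolution X') (projectiveResolution X) f :=
    ⟨lift f _ _, (lift_commutes_zero f _ _).trans (by simp)⟩
  obtain ⟨z, hz⟩ := z
  have hz' : (projectiveResolution X).complex.d (n + 1) n ≫ (z : _ ⟶ Y) = 0 :=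
    (mem_ker_homShortComplex_g (R := R) _).mp hz
  have hφ : φ.hom.f n ≫ (z : (projectiveResolution X).complex.X n ⟶ Y) ∈
      LinearMap.ker ((projectiveResolution X').homShortComplex (R := R) Y n).g.hom :=
    (mem_ker_homShortComplex_g _).mpr
      ((φ.hom.comm_assoc _ _ _).symm.trans ((congrArg _ hz').trans comp_zero))
  refine (congrArg _ (map_cocycleToExt Y n φ ⟨z, hz⟩ hφ)).trans ?_
  refine (extLinearEquiv_cocycleToExt _).trans ?_
  refine Eq.trans ?_ (congrArg (fun w ↦ (Abelian.Ext.mk₀ f).comp w (zero_add n))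
    (extLinearEquiv_cocycleToExt ⟨z, hz⟩)).symm
  exact (mk₀_comp_extMk z (n + 1) rfl hz' φ).symm

end CategoryTheory

end

end

section

open Limits Opposite Abelian

section Gamma

variable {R : Type u} [CommRing R] (𝔞 : Ideal R) (M : Type u) [AddCommGroup M] [Module R M]

/-- The submodule `Γ_𝔞(M)` of the elements annihilated by some power of `𝔞`. -/
def idealTorsion : Submodule R M where
  carrier := {m | ∃ n : ℕ, ∀ a ∈ 𝔞 ^ n, a • m = 0}
  zero_mem' := ⟨0, by simp⟩
  add_mem' := by
    rintro x y ⟨n, hn⟩ ⟨k, hk⟩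
    refine ⟨n + k, fun a ha ↦ ?_⟩
    rw [smul_add, hn a (Ideal.pow_le_pow_right (by lia) ha),
      hk a (Ideal.pow_le_pow_right (by lia) ha), add_zero]
  smul_mem' := by
    rintro r x ⟨n, hn⟩
    exact ⟨n, fun a ha ↦ by rw [smul_comm, hn a ha, smul_zero]⟩

variable {𝔞 M}

theorem isTorsionIdeal_idealTorsion : IsTorsionIdeal 𝔞 (idealTorsion 𝔞 M) := by
  rintro ⟨m, n, hn⟩
  exact ⟨n, fun a ha ↦ Subtype.ext (hn a ha)⟩

theorem exists_pow_smul_eq_zero_of_fg {N : Submodule R M} (hN : N.FG) (h : N ≤ idealTorsion 𝔞 M) :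
    ∃ n : ℕ, ∀ a ∈ 𝔞 ^ n, ∀ x ∈ N, a • x = 0 := by
  induction N, hN using Submodule.fg_induction with
  | singleton x =>
    obtain ⟨n, hn⟩ := h (Submodule.mem_span_singleton_self x)
    refine ⟨n, fun a ha y hy ↦ ?_⟩
    obtain ⟨r, rfl⟩ := Submodule.mem_span_singleton.mp hy
    rw [smul_comm, hn a ha, smul_zero]
  | sup N₁ N₂ _ _ h₁ h₂ =>
    obtain ⟨n, hn⟩ := h₁ (le_sup_left.trans h)
    obtain ⟨k, hk⟩ := h₂ (le_sup_right.trans h)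
    refine ⟨n + k, fun a ha z hz ↦ ?_⟩
    obtain ⟨x, hx, y, hy, rfl⟩ := Submodule.mem_sup.mp hz
    rw [smul_add, hn a (Ideal.pow_le_pow_right (by lia) ha) x hx,
      hk a (Ideal.pow_le_pow_right (by lia) ha) y hy, add_zero]

theorem mem_idealTorsion_of_forall_smul_mem [IsNoetherianRing R] {m : M} {n : ℕ}
    (h : ∀ a ∈ 𝔞 ^ n, a • m ∈ idealTorsion 𝔞 M) : m ∈ idealTorsion 𝔞 M := by
  obtain ⟨k, hk⟩ := exists_pow_smul_eq_zero_of_fg (𝔞 := 𝔞)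
    ((IsNoetherian.noetherian (𝔞 ^ n)).map (LinearMap.toSpanSingleton R M m))
    (by rintro _ ⟨a, ha, rfl⟩; exact h a ha)
  refine ⟨k + n, fun a ha ↦ ?_⟩
  rw [pow_add] at ha
  induction ha using Submodule.mul_induction_on' with
  | mem_mul_mem a ha b hb => rw [mul_smul]; exact hk a ha _ ⟨b, hb, rfl⟩
  | add x _ y _ hx hy => rw [add_smul, hx, hy, add_zero]

theorem idealTorsion_quotient [IsNoetherianRing R] :
    idealTorsion 𝔞 (M ⧸ idealTorsion 𝔞 M) = ⊥ := by
  rw [eq_bot_iff]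
  intro x hx
  obtain ⟨m, rfl⟩ := Submodule.Quotient.mk_surjective _ x
  obtain ⟨n, hn⟩ := hx
  refine (Submodule.Quotient.mk_eq_zero _).mpr (mem_idealTorsion_of_forall_smul_mem (n := n) ?_)
  exact fun a ha ↦ (Submodule.Quotient.mk_eq_zero _).mp (hn a ha)

theorem injective_idealTorsion [IsNoetherianRing R] [Module.Injective R M] :
    Module.Injective R (idealTorsion 𝔞 M) := by
  refine Module.Baer.injective fun I f ↦ ?_
  obtain ⟨n, hn⟩ := exists_pow_smul_eq_zero_of_fg (𝔞 := 𝔞)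
    (N := (LinearMap.range f).map (idealTorsion 𝔞 M).subtype)
    (((Module.Finite.iff_fg).mp inferInstance : (LinearMap.range f).FG).map _)
    (Submodule.map_subtype_le _ _)
  obtain ⟨k, hk⟩ := Ideal.exists_pow_inf_eq_pow_smul (M := R) 𝔞 I
  let g : (I ⧸ Submodule.comap I.subtype (𝔞 ^ (n + k))) →ₗ[R] M :=
    Submodule.liftQ _ ((idealTorsion 𝔞 M).subtype ∘ₗ f) (by
      rintro ⟨x, hxI⟩ hx
      have hx' : x ∈ 𝔞 ^ n • (𝔞 ^ k • (⊤ : Submodule R R) ⊓ I) := by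
        have := hk (n + k) (by lia)
        rw [show n + k - k = n by lia] at this
        rw [← this]
        exact ⟨by simpa using hx, hxI⟩
      have key : 𝔞 ^ n • (𝔞 ^ k • (⊤ : Submodule R R) ⊓ I) ≤
          (LinearMap.ker ((idealTorsion 𝔞 M).subtype ∘ₗ f)).map I.subtype := by
        rw [Submodule.smul_le]
        rintro a ha y ⟨-, hy⟩
        refine ⟨a • ⟨y, hy⟩, ?_, rfl⟩
        rw [SetLike.mem_coe, LinearMap.mem_ker, map_smul]
        exact hn a ha _ ⟨_, ⟨_, rfl⟩, rfl⟩
      obtain ⟨y, hy, hyx⟩ := key hx'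
      rwa [show y = ⟨x, hxI⟩ from Subtype.ext hyx] at hy)
  obtain ⟨h, hh⟩ := Module.Injective.out
    (Submodule.mapQ (Submodule.comap I.subtype (𝔞 ^ (n + k))) (𝔞 ^ (n + k)) I.subtype le_rfl)
    (by
      rw [← LinearMap.ker_eq_bot, Submodule.ker_mapQ]
      exact Submodule.mkQ_map_self _) g
  have hmem (r : R) : h (Submodule.Quotient.mk r) ∈ idealTorsion 𝔞 M := by
    refine ⟨n + k, fun a ha ↦ ?_⟩
    rw [← map_smul, ← Submodule.Quotient.mk_smul, smul_eq_mul,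
      (Submodule.Quotient.mk_eq_zero _).mpr (Ideal.mul_mem_right _ _ ha), map_zero]
  refine ⟨(h ∘ₗ Submodule.mkQ _).codRestrict _ hmem, fun x hx ↦ Subtype.ext ?_⟩
  exact hh (Submodule.Quotient.mk ⟨x, hx⟩)

end Gamma

section IdealPowers

variable {R : Type u} [CommRing R] {𝔞 : Ideal R}

/-- The projection `R ⧸ I ⟶ R ⧸ J` for `I ≤ J`. -/
noncomputable def quotientProj {I J : Ideal R} (h : I ≤ J) :
    ModuleCat.of R (R ⧸ I) ⟶ ModuleCat.of R (R ⧸ J) :=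
  ModuleCat.ofHom (Submodule.mapQ I J LinearMap.id h)

theorem quotientProj_comp {I J K : Ideal R} (h : I ≤ J) (h' : J ≤ K) :
    quotientProj h ≫ quotientProj h' = quotientProj (h.trans h') := by
  ext
  rfl

/-- The transition maps of the direct system defining local cohomology. -/
noncomputable def extPowMap (𝔞 : Ideal R) (M : ModuleCat.{u} R) (i : ℕ) {s t : ℕ} (h : s ≤ t) :
    Ext (.of R (R ⧸ 𝔞 ^ s)) M i →ₗ[R] Ext (.of R (R ⧸ 𝔞 ^ t)) M i :=
  (Ext.mk₀ (quotientProj (Ideal.pow_le_pow_right h))).precompOfLinear R M (zero_add i)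

theorem extPowMap_apply {M : ModuleCat.{u} R} {i s t : ℕ} (h : s ≤ t)
    (x : Ext (.of R (R ⧸ 𝔞 ^ s)) M i) :
    extPowMap 𝔞 M i h x =
      (Ext.mk₀ (quotientProj (Ideal.pow_le_pow_right h))).comp x (zero_add i) :=
  rfl

theorem extPowMap_refl {M : ModuleCat.{u} R} {i s : ℕ} (x : Ext (.of R (R ⧸ 𝔞 ^ s)) M i) :
    extPowMap 𝔞 M i le_rfl x = x := by
  have : quotientProj (le_refl (𝔞 ^ s)) = 𝟙 _ := by
    ext
    rfl
  rw [extPowMap_apply, this, Ext.mk₀_id_comp]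

theorem extPowMap_extPowMap {M : ModuleCat.{u} R} {i s t r : ℕ} (h : s ≤ t) (h' : t ≤ r)
    (x : Ext (.of R (R ⧸ 𝔞 ^ s)) M i) :
    extPowMap 𝔞 M i h' (extPowMap 𝔞 M i h x) = extPowMap 𝔞 M i (h.trans h') x := by
  simp only [extPowMap_apply, Ext.mk₀_comp_mk₀_assoc, quotientProj_comp]

theorem extPowMap_comp {M N : ModuleCat.{u} R} {i j k s t : ℕ} (h : s ≤ t) (hk : i + j = k)
    (x : Ext (.of R (R ⧸ 𝔞 ^ s)) M i) (y : Ext M N j) :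
    extPowMap 𝔞 N k h (x.comp y hk) = (extPowMap 𝔞 M i h x).comp y hk :=
  (Ext.comp_assoc _ _ _ (zero_add i) hk (by lia)).symm

/-- The element of `N` that an element of `Ext⁰(R ⧸ I, N) = Hom(R ⧸ I, N)` corresponds to. -/
noncomputable def extZeroEval (I : Ideal R) (N : ModuleCat.{u} R) :
    Ext (.of R (R ⧸ I)) N 0 →ₗ[R] N :=
  (LinearMap.applyₗ (Submodule.Quotient.mk (p := I) 1)) ∘ₗ
    (ModuleCat.homLinearEquiv (M := .of R (R ⧸ I)) (N := N) (S := R)).toLinearMap ∘ₗ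
    (Ext.linearEquiv₀ (R := R)).toLinearMap

theorem extZeroEval_mk₀ {I : Ideal R} {N : ModuleCat.{u} R} (φ : .of R (R ⧸ I) ⟶ N) :
    extZeroEval I N (Ext.mk₀ φ) = φ.hom (Submodule.Quotient.mk 1) := by
  obtain ⟨x, rfl⟩ := (Ext.linearEquiv₀ (R := R)).surjective φ
  rw [Ext.mk₀_linearEquiv₀_apply]
  rfl

theorem extZeroEval_injective (I : Ideal R) (N : ModuleCat.{u} R) :
    Function.Injective (extZeroEval I N) := by
  rw [← LinearMap.ker_eq_bot, LinearMap.ker_eq_bot']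
  intro x hx
  obtain ⟨φ, rfl⟩ := (Ext.mk₀_bijective _ _).2 x
  rw [extZeroEval_mk₀] at hx
  have : φ = 0 := by
    refine ModuleCat.hom_ext (LinearMap.ext fun r ↦ ?_)
    obtain ⟨r, rfl⟩ := Submodule.Quotient.mk_surjective _ r
    have := congr(r • $hx)
    rwa [← map_smul, ← Submodule.Quotient.mk_smul, smul_eq_mul, mul_one, smul_zero] at this
  rw [this, Ext.mk₀_zero]

theorem smul_extZeroEval {I : Ideal R} {N : ModuleCat.{u} R} (x : Ext (.of R (R ⧸ I)) N 0)
    {a : R} (ha : a ∈ I) : a • extZeroEval I N x = 0 := by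
  obtain ⟨φ, rfl⟩ := (Ext.mk₀_bijective _ _).2 x
  rw [extZeroEval_mk₀, ← map_smul, ← Submodule.Quotient.mk_smul, smul_eq_mul, mul_one,
    (Submodule.Quotient.mk_eq_zero _).mpr ha, map_zero]

theorem exists_extZeroEval_eq {I : Ideal R} {N : ModuleCat.{u} R} {z : N}
    (hz : ∀ a ∈ I, a • z = 0) : ∃ x, extZeroEval I N x = z := by
  refine ⟨Ext.mk₀ (ModuleCat.ofHom (Submodule.liftQ I (LinearMap.toSpanSingleton R N z)
    fun a ha ↦ hz a ha)), ?_⟩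
  rw [extZeroEval_mk₀]
  exact one_smul R z

theorem extZeroEval_comp_mk₀ {I : Ideal R} {N N' : ModuleCat.{u} R}
    (x : Ext (.of R (R ⧸ I)) N 0) (f : N ⟶ N') :
    extZeroEval I N' (x.comp (Ext.mk₀ f) (zero_add 0)) = f.hom (extZeroEval I N x) := by
  obtain ⟨φ, rfl⟩ := (Ext.mk₀_bijective _ _).2 x
  rw [Ext.mk₀_comp_mk₀, extZeroEval_mk₀, extZeroEval_mk₀]
  rfl

theorem extZeroEval_extPowMap {N : ModuleCat.{u} R} {s t : ℕ} (h : s ≤ t)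
    (x : Ext (.of R (R ⧸ 𝔞 ^ s)) N 0) :
    extZeroEval (𝔞 ^ t) N (extPowMap 𝔞 N 0 h x) = extZeroEval (𝔞 ^ s) N x := by
  obtain ⟨φ, rfl⟩ := (Ext.mk₀_bijective _ _).2 x
  rw [extPowMap_apply, Ext.mk₀_comp_mk₀, extZeroEval_mk₀, extZeroEval_mk₀]
  rfl

theorem subsingleton_ext_zero_of_idealTorsion_eq_bot {N : ModuleCat.{u} R}
    (hN : idealTorsion 𝔞 N = ⊥) {I : Ideal R} {t : ℕ} (hI : 𝔞 ^ t ≤ I) :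
    Subsingleton (Ext (.of R (R ⧸ I)) N 0) := by
  refine subsingleton_of_forall_eq 0 fun x ↦ extZeroEval_injective I N ?_
  rw [map_zero, ← Submodule.mem_bot R, ← hN]
  exact ⟨t, fun a ha ↦ smul_extZeroEval x (hI ha)⟩

theorem injective_of_idealTorsion [IsNoetherianRing R] (𝔞 : Ideal R) (J : ModuleCat.{u} R)
    [hJ : Injective J] : Injective (ModuleCat.of R (idealTorsion 𝔞 J)) := by
  have : Module.Injective R J := (Module.injective_iff_injective_object R J).mpr hJ
  exact (Module.injective_iff_injective_object R _).mp injective_idealTorsion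

theorem exists_shortExact_injective_torsion [IsNoetherianRing R] {N : ModuleCat.{u} R}
    (hN : IsTorsionIdeal 𝔞 N) :
    ∃ (J Q : ModuleCat.{u} R) (f : N ⟶ J) (g : J ⟶ Q) (w : f ≫ g = 0),
      (ShortComplex.mk f g w).ShortExact ∧ Injective J ∧ IsTorsionIdeal 𝔞 J ∧
        IsTorsionIdeal 𝔞 Q := by
  obtain ⟨⟨J, hJ, ι, hιm⟩⟩ := EnoughInjectives.presentation N
  have hι : Function.Injective ι.hom := (ModuleCat.mono_iff_injective _).mp hιm
  let f : N →ₗ[R] idealTorsion 𝔞 J := ι.hom.codRestrict _ fun z ↦ by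
    obtain ⟨n, hn⟩ := hN z
    exact ⟨n, fun a ha ↦ by rw [← map_smul, hn a ha, map_zero]⟩
  have hf : Function.Injective f := fun x y hxy ↦ hι congr(($hxy).1)
  refine ⟨_, _, _, _, _, shortExact_moduleCat (f := f) (g := f.range.mkQ)
    (LinearMap.exact_map_mkQ_range f) hf (Submodule.mkQ_surjective _),
    injective_of_idealTorsion 𝔞 J, isTorsionIdeal_idealTorsion, fun q ↦ ?_⟩
  obtain ⟨j, rfl⟩ := Submodule.mkQ_surjective _ q
  obtain ⟨n, hn⟩ := isTorsionIdeal_idealTorsion j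
  exact ⟨n, fun a ha ↦ by rw [← map_smul, hn a ha, map_zero]⟩

theorem exists_extPowMap_eq_zero [IsNoetherianRing R] (i : ℕ) {N : ModuleCat.{u} R}
    (hN : IsTorsionIdeal 𝔞 N) {t : ℕ} (y : Ext (.of R (R ⧸ 𝔞 ^ t)) N (i + 1)) :
    ∃ s, ∃ h : t ≤ s, extPowMap 𝔞 N (i + 1) h y = 0 := by
  induction i generalizing N t with
  | zero =>
    obtain ⟨J, Q, f, g, w, hS, hJ, hJt, hQt⟩ := exists_shortExact_injective_torsion hN
    have hsub := Ext.subsingleton_of_injective (.of R (R ⧸ 𝔞 ^ t)) J 0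
    obtain ⟨x, rfl⟩ := Ext.covariant_sequence_exact₁ _ hS y (hsub.elim _ _) (zero_add 1)
    have hg : Function.Surjective g.hom := (ModuleCat.epi_iff_surjective g).mp hS.epi_g
    obtain ⟨j, hj⟩ := hg (extZeroEval _ _ x)
    obtain ⟨n, hn⟩ := hJt j
    obtain ⟨v, hv⟩ := exists_extZeroEval_eq (I := 𝔞 ^ (max n t))
      fun a ha ↦ hn a (Ideal.pow_le_pow_right (le_max_left _ _) ha)
    have hx : extPowMap 𝔞 _ 0 (le_max_right n t) x = v.comp (Ext.mk₀ g) (zero_add 0) := by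
      apply extZeroEval_injective
      rw [extZeroEval_extPowMap, extZeroEval_comp_mk₀, hv, hj]
    refine ⟨max n t, le_max_right _ _, ?_⟩
    rw [extPowMap_comp _ (zero_add 1), hx, Ext.comp_assoc v _ _ (zero_add 0) (zero_add 1)
      (by lia), hS.comp_extClass, Ext.comp_zero]
  | succ i ih =>
    obtain ⟨J, Q, f, g, w, hS, hJ, hJt, hQt⟩ := exists_shortExact_injective_torsion hN
    have hsub := Ext.subsingleton_of_injective (.of R (R ⧸ 𝔞 ^ t)) J (i + 1)
    obtain ⟨x, rfl⟩ := Ext.covariant_sequence_exact₁ _ hS y (hsub.elim _ _) rfl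
    obtain ⟨s, h, hs⟩ := ih hQt x
    exact ⟨s, h, by rw [extPowMap_comp, hs, Ext.zero_comp]⟩

end IdealPowers

section Shift

variable {R : Type u} [CommRing R] {𝔞 : Ideal R}

/-- The short exact sequence `0 ⟶ Γ_𝔞(M) ⟶ M ⟶ M ⧸ Γ_𝔞(M) ⟶ 0`. -/
theorem shortExact_idealTorsion (𝔞 : Ideal R) (M : ModuleCat.{u} R) :
    (ShortComplex.mk (X₁ := .of R (idealTorsion 𝔞 M)) (X₂ := M)
      (X₃ := .of R (M ⧸ idealTorsion 𝔞 M)) (ModuleCat.ofHom (idealTorsion 𝔞 M).subtype)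
      (ModuleCat.ofHom (idealTorsion 𝔞 M).mkQ)
      (by ext; simp)).ShortExact :=
  shortExact_moduleCat (A := idealTorsion 𝔞 M) (B := M) (LinearMap.exact_subtype_mkQ _)
    (Submodule.subtype_injective _) (Submodule.mkQ_surjective _)

/-- `T` is the cokernel of an embedding of `M ⧸ Γ_𝔞(M)` into a module that is invisible to the
functors `Extⁱ(R ⧸ I, -)` for all ideals `I` containing a power of `𝔞`. -/
def IsTorsionShift (𝔞 : Ideal R) (M T : ModuleCat.{u} R) : Prop :=
  ∃ (E : ModuleCat.{u} R) (f : .of R (M ⧸ idealTorsion 𝔞 M) ⟶ E) (g : E ⟶ T) (w : f ≫ g = 0),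
    (ShortComplex.mk f g w).ShortExact ∧
      ∀ (t : ℕ) (I : Ideal R), 𝔞 ^ t ≤ I → ∀ i, Subsingleton (Ext (.of R (R ⧸ I)) E i)

theorem exists_isTorsionShift [IsNoetherianRing R] (𝔞 : Ideal R) (M : ModuleCat.{u} R) :
    ∃ T, IsTorsionShift 𝔞 M T := by
  obtain ⟨⟨J, hJ, ι, hιm⟩⟩ := EnoughInjectives.presentation M
  have hι : Function.Injective ι.hom := (ModuleCat.mono_iff_injective _).mp hιm
  have hcomap : idealTorsion 𝔞 M = (idealTorsion 𝔞 J).comap ι.hom := by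
    ext m
    refine exists_congr fun n ↦ forall₂_congr fun a _ ↦ ?_
    rw [← map_smul, map_eq_zero_iff _ hι]
  let f : (M ⧸ idealTorsion 𝔞 M) →ₗ[R] (J ⧸ idealTorsion 𝔞 J) :=
    Submodule.mapQ _ _ ι.hom hcomap.le
  have hf : Function.Injective f := by
    rw [← LinearMap.ker_eq_bot, Submodule.ker_mapQ, ← hcomap]
    exact Submodule.mkQ_map_self _
  refine ⟨_, _, _, _, _, shortExact_moduleCat (f := f) (g := f.range.mkQ)
    (LinearMap.exact_map_mkQ_range f) hf (Submodule.mkQ_surjective _), fun t I hI i ↦ ?_⟩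
  cases i with
  | zero => exact subsingleton_ext_zero_of_idealTorsion_eq_bot idealTorsion_quotient hI
  | succ i =>
    have hJ₁ := injective_of_idealTorsion 𝔞 J
    refine subsingleton_of_forall_eq 0 fun x ↦ ?_
    obtain ⟨y, rfl⟩ := Ext.covariant_sequence_exact₃ _ (shortExact_idealTorsion 𝔞 J) x rfl
      ((Ext.subsingleton_of_injective _ _ (i + 1)).elim _ _)
    rw [(Ext.subsingleton_of_injective _ J i).elim y 0, Ext.zero_comp]

theorem bijective_postcomp_extClass {X : ModuleCat.{u} R} {S : ShortComplex (ModuleCat.{u} R)}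
    (hS : S.ShortExact) {i j : ℕ} (hj : i + 1 = j) (hi : Subsingleton (Ext X S.X₂ i))
    (hi' : Subsingleton (Ext X S.X₂ j)) :
    Function.Bijective (hS.extClass.postcompOfLinear R X hj) := by
  constructor
  · rw [← LinearMap.ker_eq_bot, LinearMap.ker_eq_bot']
    intro x hx
    obtain ⟨y, rfl⟩ := Ext.covariant_sequence_exact₃ _ hS x hj hx
    rw [hi.elim y 0, Ext.zero_comp]
  · intro x
    exact Ext.covariant_sequence_exact₁ _ hS x (hi'.elim _ _) hj

/-- A presentation of `H` as the direct limit of the modules `Extⁱ(R ⧸ 𝔞 ^ t, M)`. -/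
structure LocalCohomologyCocone (𝔞 : Ideal R) (M : ModuleCat.{u} R) (i : ℕ) (H : Type u)
    [AddCommGroup H] [Module R H] where
  /-- the maps to the limit -/
  ι (t : ℕ) : Ext (.of R (R ⧸ 𝔞 ^ t)) M i →ₗ[R] H
  ι_extPowMap {s t : ℕ} (h : s ≤ t) (x : Ext (.of R (R ⧸ 𝔞 ^ s)) M i) :
    ι t (extPowMap 𝔞 M i h x) = ι s x
  exists_ι_eq (z : H) : ∃ t x, ι t x = z
  exists_map_eq_zero {t : ℕ} {x : Ext (.of R (R ⧸ 𝔞 ^ t)) M i} (hx : ι t x = 0) :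
    ∃ s, ∃ h : t ≤ s, extPowMap 𝔞 M i h x = 0

namespace LocalCohomologyCocone

variable {M : ModuleCat.{u} R} {i : ℕ} {H H' : Type u} [AddCommGroup H] [Module R H]
  [AddCommGroup H'] [Module R H']

theorem nonempty_directLimit_equiv (c : LocalCohomologyCocone 𝔞 M i H) :
    Nonempty (Module.DirectLimit (fun t ↦ Ext (.of R (R ⧸ 𝔞 ^ t)) M i)
      (fun _ _ h ↦ extPowMap 𝔞 M i h) ≃ₗ[R] H) := by
  refine ⟨LinearEquiv.ofBijective
    (Module.DirectLimit.lift R ℕ _ _ c.ι fun _ _ h x ↦ c.ι_extPowMap h x) ⟨?_, fun z ↦ ?_⟩⟩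
  · rw [← LinearMap.ker_eq_bot, LinearMap.ker_eq_bot']
    intro z hz
    obtain ⟨t, x, rfl⟩ := Module.DirectLimit.exists_of z
    rw [Module.DirectLimit.lift_of] at hz
    obtain ⟨s, h, hs⟩ := c.exists_map_eq_zero hz
    rw [← Module.DirectLimit.of_f (hij := h), hs, map_zero]
  · obtain ⟨t, x, rfl⟩ := c.exists_ι_eq z
    refine ⟨Module.DirectLimit.of R ℕ (fun t ↦ Ext (.of R (R ⧸ 𝔞 ^ t)) M i)
      (fun _ _ h ↦ extPowMap 𝔞 M i h) t x, ?_⟩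
    rw [Module.DirectLimit.lift_of]

theorem nonempty_equiv (c : LocalCohomologyCocone 𝔞 M i H)
    (c' : LocalCohomologyCocone 𝔞 M i H') : Nonempty (H ≃ₗ[R] H') :=
  let ⟨e⟩ := c.nonempty_directLimit_equiv
  let ⟨e₂⟩ := c'.nonempty_directLimit_equiv
  ⟨e.symm.trans e₂⟩

/-- The direct limit of `Hom(R ⧸ 𝔞 ^ t, M)` is `Γ_𝔞(M)`. -/
noncomputable def torsion (𝔞 : Ideal R) (M : ModuleCat.{u} R) :
    LocalCohomologyCocone 𝔞 M 0 (idealTorsion 𝔞 M) where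
  ι t := (extZeroEval (𝔞 ^ t) M).codRestrict _ fun x ↦ ⟨t, fun _ ha ↦ smul_extZeroEval x ha⟩
  ι_extPowMap h x := Subtype.ext (extZeroEval_extPowMap h x)
  exists_ι_eq := by
    rintro ⟨z, t, hz⟩
    obtain ⟨x, hx⟩ := exists_extZeroEval_eq hz
    exact ⟨t, x, Subtype.ext hx⟩
  exists_map_eq_zero {t x} hx := by
    refine ⟨t, le_rfl, ?_⟩
    rw [extPowMap_refl]
    refine extZeroEval_injective _ _ (congr(($hx).1).trans ?_)
    rw [map_zero]
    rfl

theorem nonempty_of_isTorsionShift [IsNoetherianRing R] {T : ModuleCat.{u} R}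
    (hT : IsTorsionShift 𝔞 M T) (c : LocalCohomologyCocone 𝔞 T i H) :
    Nonempty (LocalCohomologyCocone 𝔞 M (i + 1) H) := by
  obtain ⟨E, f, g, w, hS, hE⟩ := hT
  let δ (t : ℕ) := LinearEquiv.ofBijective _ <|
    bijective_postcomp_extClass (X := .of R (R ⧸ 𝔞 ^ t)) hS (rfl : i + 1 = i + 1)
      (hE t _ le_rfl i) (hE t _ le_rfl (i + 1))
  let p (t : ℕ) := (Ext.mk₀ (ModuleCat.ofHom (idealTorsion 𝔞 M).mkQ)).postcompOfLinear R
    (.of R (R ⧸ 𝔞 ^ t)) (add_zero (i + 1))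
  have hδ {s t : ℕ} (h : s ≤ t) (x) : extPowMap 𝔞 _ _ h (δ s x) = δ t (extPowMap 𝔞 _ _ h x) :=
    extPowMap_comp h rfl _ _
  have hδ' {s t : ℕ} (h : s ≤ t) (x) :
      (δ t).symm (extPowMap 𝔞 _ _ h x) = extPowMap 𝔞 _ _ h ((δ s).symm x) := by
    rw [LinearEquiv.symm_apply_eq, ← hδ, LinearEquiv.apply_symm_apply]
  have hp {s t : ℕ} (h : s ≤ t) (x) : extPowMap 𝔞 _ _ h (p s x) = p t (extPowMap 𝔞 _ _ h x) :=
    extPowMap_comp h (add_zero _) _ _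
  have hΓ : IsTorsionIdeal 𝔞 (ModuleCat.of R (idealTorsion 𝔞 M)) := isTorsionIdeal_idealTorsion
  refine ⟨⟨fun t ↦ c.ι t ∘ₗ (δ t).symm.toLinearMap ∘ₗ p t, fun {s t} h x ↦ ?_, fun z ↦ ?_,
    fun {t x} hx ↦ ?_⟩⟩
  · change c.ι t ((δ t).symm (p t _)) = c.ι s ((δ s).symm (p s _))
    rw [← hp, hδ', c.ι_extPowMap]
  · obtain ⟨t, x, rfl⟩ := c.exists_ι_eq z
    obtain ⟨s, h, hs⟩ := exists_extPowMap_eq_zero (i + 1) hΓ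
      ((δ t x).comp (shortExact_idealTorsion 𝔞 M).extClass rfl)
    rw [extPowMap_comp, hδ] at hs
    obtain ⟨y, hy⟩ := Ext.covariant_sequence_exact₃ _ (shortExact_idealTorsion 𝔞 M) _ rfl hs
    refine ⟨s, y, ?_⟩
    change c.ι s ((δ s).symm (p s y)) = _
    rw [show p s y = _ from hy, LinearEquiv.symm_apply_apply, c.ι_extPowMap]
  · obtain ⟨s, h, hs⟩ := c.exists_map_eq_zero hx
    change extPowMap 𝔞 _ _ h ((δ t).symm (p t x)) = 0 at hs
    rw [← hδ', hp, LinearEquiv.map_eq_zero_iff] at hs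
    obtain ⟨y, hy⟩ := Ext.covariant_sequence_exact₂ _ (shortExact_idealTorsion 𝔞 M) _ hs
    obtain ⟨r, h', hr⟩ := exists_extPowMap_eq_zero i hΓ y
    refine ⟨r, h.trans h', ?_⟩
    rw [← extPowMap_extPowMap h h', ← hy, extPowMap_comp, hr, Ext.zero_comp]

end LocalCohomologyCocone

end Shift

namespace LocalCohomologyCocone

variable {R : Type u} [CommRing R]

/-- Mathlib's local cohomology is the direct limit of the modules `Extⁱ(R ⧸ 𝔞 ^ t, M)`. -/
theorem nonempty_localCohomology (𝔞 : Ideal R) (M : ModuleCat.{u} R) (i : ℕ) :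
    Nonempty (LocalCohomologyCocone 𝔞 M i ((localCohomology 𝔞 i).obj M)) := by
  let I := localCohomology.idealPowersDiagram 𝔞
  have := localCohomology.hasColimitDiagram.{u, 0} I i
  let F : (ℕᵒᵖ)ᵒᵖ ⥤ ModuleCat.{u} R :=
    localCohomology.diagram I i ⋙ (evaluation _ _).obj M
  let D : Cocone F := ((evaluation (ModuleCat.{u} R) (ModuleCat.{u} R)).obj M).mapCocone
    (colimit.cocone (localCohomology.diagram I i))
  have hD : IsColimit D := isColimitOfPreserves _ (colimit.isColimit _)
  let e (t : ℕ) : F.obj (op (op t)) ≃ₗ[R] Ext (.of R (R ⧸ 𝔞 ^ t)) M i :=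
    extLinearEquiv R (ModuleCat.of R (R ⧸ 𝔞 ^ t)) M i
  let d (t : ℕ) : F.obj (op (op t)) →ₗ[R] (localCohomology 𝔞 i).obj M :=
    (D.ι.app (op (op t))).hom
  have he {s t : ℕ} (h : s ≤ t) (x : F.obj (op (op s))) :
      e t ((F.map (homOfLE h).op.op).hom x) = extPowMap 𝔞 M i h (e s x) :=
    extLinearEquiv_naturality _ x
  have hd {s t : ℕ} (h : s ≤ t) (x : F.obj (op (op s))) :
      d t ((F.map (homOfLE h).op.op).hom x) = d s x :=
    congr(($(D.w (homOfLE h).op.op)).hom x)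
  have : PreservesFilteredColimitsOfSize.{0, 0} (forget (ModuleCat.{u} R)) :=
    preservesFilteredColimitsOfSize_shrink _
  have hde (t : ℕ) (x) : (d t ∘ₗ (e t).symm.toLinearMap) (e t x) = d t x :=
    congr(d t $((e t).symm_apply_apply x))
  refine ⟨⟨fun t ↦ d t ∘ₗ (e t).symm.toLinearMap, fun {s t} h x ↦ ?_,
    fun z ↦ ?_, fun {t x} hx ↦ ?_⟩⟩
  · obtain ⟨x, rfl⟩ := (e s).surjective x
    rw [← he, hde, hde, hd]
  · obtain ⟨⟨⟨t⟩⟩, x, hx⟩ := Concrete.isColimit_exists_rep F hD z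
    exact ⟨t, e t x, (hde t x).trans hx⟩
  · obtain ⟨x, rfl⟩ := (e t).surjective x
    rw [hde] at hx
    obtain ⟨⟨⟨s⟩⟩, f, g, hfg⟩ := (Concrete.isColimit_rep_eq_iff_exists F hD x 0).mp
      (hx.trans (map_zero (d t)).symm)
    have h : t ≤ s := leOfHom f.unop.unop
    refine ⟨s, h, ?_⟩
    rw [← he, LinearEquiv.map_eq_zero_iff]
    exact hfg.trans (map_zero (F.map g).hom)

end LocalCohomologyCocone

section Cofinite

variable {R : Type u} [CommRing R] {𝔞 : Ideal R}

/-- All modules `Extⁱ(R ⧸ 𝔞, N)` are finitely generated. -/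
def ExtFinite (𝔞 : Ideal R) (N : ModuleCat.{u} R) : Prop :=
  ∀ i, Module.Finite R (Ext (.of R (R ⧸ 𝔞)) N i)

theorem exact_postcomp₁ (X : ModuleCat.{u} R) {S : ShortComplex (ModuleCat.{u} R)}
    (hS : S.ShortExact) {i j : ℕ} (h : i + 1 = j) :
    Function.Exact (hS.extClass.postcompOfLinear R X h)
      ((Ext.mk₀ S.f).postcompOfLinear R X (add_zero j)) := by
  refine fun x ↦ ⟨fun hx ↦ Ext.covariant_sequence_exact₁ _ hS x hx h, ?_⟩
  rintro ⟨y, rfl⟩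
  exact (Ext.comp_assoc y hS.extClass (Ext.mk₀ S.f) h (add_zero 1) (by lia)).trans
    (by rw [hS.extClass_comp, Ext.comp_zero])

theorem exact_postcomp₂ (X : ModuleCat.{u} R) {S : ShortComplex (ModuleCat.{u} R)}
    (hS : S.ShortExact) (i : ℕ) :
    Function.Exact ((Ext.mk₀ S.f).postcompOfLinear R X (add_zero i))
      ((Ext.mk₀ S.g).postcompOfLinear R X (add_zero i)) := by
  refine fun x ↦ ⟨fun hx ↦ Ext.covariant_sequence_exact₂ _ hS x hx, ?_⟩
  rintro ⟨y, rfl⟩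
  exact (Ext.comp_assoc y (Ext.mk₀ S.f) (Ext.mk₀ S.g) (add_zero i) (add_zero 0) (by lia)).trans
    (by rw [Ext.mk₀_comp_mk₀, S.zero, Ext.mk₀_zero, Ext.comp_zero])

theorem exact_postcomp₃ (X : ModuleCat.{u} R) {S : ShortComplex (ModuleCat.{u} R)}
    (hS : S.ShortExact) {i j : ℕ} (h : i + 1 = j) :
    Function.Exact ((Ext.mk₀ S.g).postcompOfLinear R X (add_zero i))
      (hS.extClass.postcompOfLinear R X h) := by
  refine fun x ↦ ⟨fun hx ↦ Ext.covariant_sequence_exact₃ _ hS x h hx, ?_⟩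
  rintro ⟨y, rfl⟩
  exact (Ext.comp_assoc y (Ext.mk₀ S.g) hS.extClass (add_zero i) (zero_add 1) (by lia)).trans
    (by rw [hS.comp_extClass, Ext.comp_zero])

theorem ExtFinite.congr {N : ModuleCat.{u} R} {N' : ModuleCat.{u} R} (e : N ≃ₗ[R] N')
    (h : ExtFinite 𝔞 N) : ExtFinite 𝔞 N' := by
  intro i
  have := h i
  refine Module.Finite.of_surjective
    ((Ext.mk₀ e.toModuleIso.hom).postcompOfLinear R (.of R (R ⧸ 𝔞)) (add_zero i)) fun x ↦
    ⟨x.comp (Ext.mk₀ e.toModuleIso.inv) (add_zero i), ?_⟩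
  refine (Ext.comp_assoc x _ _ (add_zero i) (add_zero 0) (by lia)).trans ?_
  rw [Ext.mk₀_comp_mk₀, Iso.inv_hom_id, Ext.comp_mk₀_id]

/-- The dimension shift for `Ext` along a torsion shift. -/
theorem IsTorsionShift.nonempty_equiv {M T : ModuleCat.{u} R} (hT : IsTorsionShift 𝔞 M T)
    (i : ℕ) : Nonempty (Ext (ModuleCat.of R (R ⧸ 𝔞)) T i ≃ₗ[R]
      Ext (ModuleCat.of R (R ⧸ 𝔞)) (ModuleCat.of R (M ⧸ idealTorsion 𝔞 M)) (i + 1)) := by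
  obtain ⟨E, f, g, w, hS, hE⟩ := hT
  exact ⟨.ofBijective _ (bijective_postcomp_extClass hS rfl (hE 1 _ (pow_one 𝔞).le i)
    (hE 1 _ (pow_one 𝔞).le (i + 1)))⟩

theorem isCofinite_iff {N : ModuleCat.{u} R} :
    IsCofinite 𝔞 N ↔ Module.support R N ⊆ PrimeSpectrum.zeroLocus (𝔞 : Set R) ∧
      ExtFinite 𝔞 N :=
  and_congr_right fun _ ↦ forall_congr' fun i ↦
    Module.Finite.equiv_iff (extLinearEquiv R (ModuleCat.of R (R ⧸ 𝔞)) N i)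

variable [IsNoetherianRing R]

theorem ExtFinite.quotient_idealTorsion {M : ModuleCat.{u} R} (hM : ExtFinite 𝔞 M)
    (hΓ : ExtFinite 𝔞 (.of R (idealTorsion 𝔞 M))) :
    ExtFinite 𝔞 (.of R (M ⧸ idealTorsion 𝔞 M)) := by
  intro i
  have := hM i
  have := hΓ (i + 1)
  exact Module.Finite.of_function_exact
    (exact_postcomp₃ (ModuleCat.of R (R ⧸ 𝔞)) (shortExact_idealTorsion 𝔞 M) (rfl : i + 1 = i + 1))

theorem IsTorsionShift.extFinite {M T : ModuleCat.{u} R} (hT : IsTorsionShift 𝔞 M T)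
    (hM : ExtFinite 𝔞 M) (hΓ : ExtFinite 𝔞 (ModuleCat.of R (idealTorsion 𝔞 M))) :
    ExtFinite 𝔞 T := by
  intro i
  obtain ⟨e⟩ := hT.nonempty_equiv i
  have := hM.quotient_idealTorsion hΓ (i + 1)
  exact Module.Finite.equiv e.symm

theorem IsTorsionShift.extFinite_idealTorsion {M T : ModuleCat.{u} R}
    (hcase : ringKrullDim (R ⧸ 𝔞) ≤ 2 ∨ ringKrullDim R ≤ 3 ∨
      ∃ x y : R, (Ideal.span {x, y}).radical = 𝔞.radical)
    (hT : IsTorsionShift 𝔞 M T) (hM : ExtFinite 𝔞 M)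
    (hΓT : ExtFinite 𝔞 (.of R (idealTorsion 𝔞 T))) :
    ExtFinite 𝔞 (.of R (idealTorsion 𝔞 M)) := by
  have hzero (N : ModuleCat.{u} R) :
      Subsingleton (Ext (ModuleCat.of R (R ⧸ 𝔞)) (ModuleCat.of R (N ⧸ idealTorsion 𝔞 N)) 0) :=
    subsingleton_ext_zero_of_idealTorsion_eq_bot (t := 1) idealTorsion_quotient (pow_one 𝔞).le
  refine finite_ext_of_finite_ext_le_two hcase isTorsionIdeal_idealTorsion fun i hi ↦ ?_
  have hfin {j : ℕ} (h : Module.Finite R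
      (Ext (.of R (R ⧸ 𝔞)) (ModuleCat.of R (M ⧸ idealTorsion 𝔞 M)) j)) :
      Module.Finite R
        (Ext (ModuleCat.of R (R ⧸ 𝔞)) (ModuleCat.of R (idealTorsion 𝔞 M)) (j + 1)) := by
    have := hM (j + 1)
    exact Module.Finite.of_function_exact
      (exact_postcomp₁ (ModuleCat.of R (R ⧸ 𝔞)) (shortExact_idealTorsion 𝔞 M) rfl)
  interval_cases i
  · have := hM 0
    let f : ModuleCat.of R (idealTorsion 𝔞 M) ⟶ M := ModuleCat.ofHom (idealTorsion 𝔞 M).subtype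
    refine Module.Finite.of_injective
      ((Ext.mk₀ f).postcompOfLinear R (ModuleCat.of R (R ⧸ 𝔞)) (zero_add 0))
      fun x y hxy ↦ extZeroEval_injective _ _ (Subtype.ext ?_)
    exact (extZeroEval_comp_mk₀ x f).symm.trans
      (congr(extZeroEval 𝔞 M $hxy).trans (extZeroEval_comp_mk₀ y f))
  · have := hzero M
    exact hfin inferInstance
  · have := hΓT 0
    have := hzero T
    have : Module.Finite R (Ext (ModuleCat.of R (R ⧸ 𝔞)) T 0) := Module.Finite.of_function_exact
      (exact_postcomp₂ (ModuleCat.of R (R ⧸ 𝔞)) (shortExact_idealTorsion 𝔞 T) 0)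
    obtain ⟨e⟩ := hT.nonempty_equiv 0
    exact hfin (Module.Finite.equiv e)

/-- An iterated torsion shift computes local cohomology as torsion submodules. -/
theorem exists_torsionShift_sequence (𝔞 : Ideal R) (M : ModuleCat.{u} R) :
    ∃ T : ℕ → ModuleCat.{u} R, T 0 = M ∧ (∀ i, IsTorsionShift 𝔞 (T i) (T (i + 1))) ∧
      ∀ i, Nonempty ((localCohomology 𝔞 i).obj M ≃ₗ[R] idealTorsion 𝔞 (T i)) := by
  choose τ hτ using exists_isTorsionShift (R := R) 𝔞
  have hc (i : ℕ) : ∀ N : ModuleCat.{u} R,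
      Nonempty (LocalCohomologyCocone 𝔞 N i (idealTorsion 𝔞 (τ^[i] N))) := by
    induction i with
    | zero => exact fun N ↦ ⟨.torsion 𝔞 N⟩
    | succ i ih =>
      intro N
      obtain ⟨c⟩ := ih (τ N)
      exact c.nonempty_of_isTorsionShift (hτ N)
  refine ⟨fun i ↦ τ^[i] M, rfl, fun i ↦ ?_, fun i ↦ ?_⟩
  · simpa only [Function.iterate_succ_apply'] using hτ _
  · obtain ⟨c⟩ := hc i M
    obtain ⟨c'⟩ := LocalCohomologyCocone.nonempty_localCohomology 𝔞 M i
    exact c'.nonempty_equiv c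

theorem extFinite_idealTorsion_of_even_or_odd {T : ℕ → ModuleCat.{u} R}
    (hcase : ringKrullDim (R ⧸ 𝔞) ≤ 2 ∨ ringKrullDim R ≤ 3 ∨
      ∃ x y : R, (Ideal.span {x, y}).radical = 𝔞.radical)
    (hT : ∀ i, IsTorsionShift 𝔞 (T i) (T (i + 1))) (h₀ : ExtFinite 𝔞 (T 0))
    (h : (∀ i, ExtFinite 𝔞 (.of R (idealTorsion 𝔞 (T (2 * i))))) ∨
      ∀ i, ExtFinite 𝔞 (.of R (idealTorsion 𝔞 (T (2 * i + 1))))) (i : ℕ) :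
    ExtFinite 𝔞 (.of R (idealTorsion 𝔞 (T i))) := by
  have hstep (i : ℕ) (hi : ExtFinite 𝔞 (T i)) : ExtFinite 𝔞 (.of R (idealTorsion 𝔞 (T i))) := by
    obtain ⟨k, rfl | rfl⟩ := i.even_or_odd'
    · exact h.elim (· k) fun h ↦ (hT _).extFinite_idealTorsion hcase hi (h k)
    · exact h.elim (fun h ↦ (hT _).extFinite_idealTorsion hcase hi (h (k + 1))) (· k)
  have hfin (i : ℕ) : ExtFinite 𝔞 (T i) := by
    induction i with
    | zero => exact h₀
    | succ i ih => exact (hT i).extFinite ih (hstep i ih)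
  exact hstep i (hfin i)

end Cofinite

end

/-- Yang–Shen, Corollary 4.3(3) (module case): let `𝔞` be a proper ideal of a noetherian ring
`R` with `dim R/𝔞 = 2`, or `dim R = 3`, or `ara 𝔞 = 2`, and let `M` be an `R`-module with
`Ext^i_R(R/𝔞, M)` finitely generated for all `i`. If all even-indexed (or all odd-indexed)
local cohomology modules `H^i_𝔞(M)` are `𝔞`-cofinite, then `H^i_𝔞(M)` is `𝔞`-cofinite for
every `i`. -/
theorem localCohomology_isCofinite_of_even_or_odd
    {R : Type u} [CommRing R] [IsNoetherianRing R] (𝔞 : Ideal R) (ha : 𝔞 ≠ ⊤)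
    (hcase : ringKrullDim (R ⧸ 𝔞) = 2 ∨ ringKrullDim R = 3 ∨ arithRank 𝔞 = 2)
    (M : ModuleCat.{u} R) (hext : ∀ i : ℕ, Module.Finite R (extIdeal 𝔞 i M))
    (h : (∀ i : ℕ, IsCofinite 𝔞 ((localCohomology 𝔞 (2 * i)).obj M)) ∨
      (∀ i : ℕ, IsCofinite 𝔞 ((localCohomology 𝔞 (2 * i + 1)).obj M))) :
    ∀ i : ℕ, IsCofinite 𝔞 ((localCohomology 𝔞 i).obj M) := by
  obtain ⟨T, rfl, hT, he⟩ := exists_torsionShift_sequence 𝔞 M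
  replace he (i : ℕ) := (he i).some
  have h' := h.imp
    (fun h i ↦ (isCofinite_iff.mp (h i)).2.congr (N' := .of R (idealTorsion 𝔞 _)) (he _))
    (fun h i ↦ (isCofinite_iff.mp (h i)).2.congr (N' := .of R (idealTorsion 𝔞 _)) (he _))
  have hcase' : ringKrullDim (R ⧸ 𝔞) ≤ 2 ∨ ringKrullDim R ≤ 3 ∨
      ∃ x y : R, (Ideal.span {x, y}).radical = 𝔞.radical := by
    refine hcase.imp Eq.le (Or.imp Eq.le fun h ↦ ?_)
    have hne : {n : ℕ | ∃ f : Fin n → R,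
        (Ideal.span (Set.range f)).radical = 𝔞.radical}.Nonempty :=
      Nat.nonempty_of_sInf_eq_succ h
    have hmem := Nat.sInf_mem hne
    rw [show sInf _ = 2 from h] at hmem
    obtain ⟨f, hf⟩ := hmem
    refine ⟨f 0, f 1, ?_⟩
    rw [← hf]
    congr 2
    ext
    simp [Fin.exists_fin_two, eq_comm]
  have h₀ : ExtFinite 𝔞 (T 0) := fun i ↦
    (Module.Finite.equiv_iff (extLinearEquiv R (ModuleCat.of R (R ⧸ 𝔞)) (T 0) i)).mp (hext i)
  refine fun i ↦ isCofinite_iff.mpr ⟨?_, ExtFinite.congr (N := .of R (idealTorsion 𝔞 _))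
    (he i).symm (extFinite_idealTorsion_of_even_or_odd hcase' hT h₀ h' i)⟩
  rw [(he i).support_eq]
  exact support_subset_zeroLocus_of_torsion isTorsionIdeal_idealTorsion
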